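/- Let X be a centered Gaussian process on [A,B] with almost surely twice continuously differentiable sample paths and twice continuously differentiable covariance. Assume the variance σ²(t) attains its maximum S at a unique point t₀ ∈ (A,B], that (σ²)′(t₀) = 0, and that ℙ(∂ₜX(t₀) = 0) < 1. Then there exist δ > 0, χ > 0, C > 0 and u₀ > 0 such that for all u ≥ u₀, |ℙ(max_{t∈[A,B]} |X(t)| ≥ u) − 2 E[N_u^+(𝓜(δ))]| ≤ C e^{−u²(1+χ)/(2S)}. -/

import Mathlib

section
open MeasureTheory ProbabilityTheory Set
open scoped NNReal

namespace GX

/-- first divided difference -/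
noncomputable def dd2 (f : ℝ → ℝ) (x y : ℝ) : ℝ := (f y - f x) / (y - x)

/-- second divided difference (zero unless `x < y < z`) -/
noncomputable def dd3 (f : ℝ → ℝ) (x y z : ℝ) : ℝ :=
  if x < y ∧ y < z then ((f z - f y) / (z - y) - (f y - f x) / (y - x)) / (z - x) else 0

/-- `f` has on `[A,B]` derivative `f1`, second derivative `f2`, and `f2` is continuous -/
structure C2 (A B : ℝ) (f f1 f2 : ℝ → ℝ) : Prop where
  d1 : ∀ x ∈ Icc A B, HasDerivWithinAt f (f1 x) (Icc A B) x
  d2 : ∀ x ∈ Icc A B, HasDerivWithinAt f1 (f2 x) (Icc A B) x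
  c2 : ContinuousOn f2 (Icc A B)

lemma C2.of_contDiffOn {A B : ℝ} (hAB : A < B) {f : ℝ → ℝ} (hf : ContDiffOn ℝ 2 f (Icc A B)) :
    C2 A B f (derivWithin f (Icc A B)) (derivWithin (derivWithin f (Icc A B)) (Icc A B)) := by
  have hu := uniqueDiffOn_Icc hAB
  have h2 : ContDiffOn ℝ (1 + 1) f (Icc A B) := by norm_num; exact hf
  rw [contDiffOn_succ_iff_derivWithin hu] at h2
  obtain ⟨hd, -, h1⟩ := h2
  have h1' : ContDiffOn ℝ (0 + 1) (derivWithin f (Icc A B)) (Icc A B) := by simpa using h1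
  rw [contDiffOn_succ_iff_derivWithin hu] at h1'
  exact ⟨fun x hx => (hd x hx).hasDerivWithinAt, fun x hx => (h1'.1 x hx).hasDerivWithinAt,
    h1'.2.2.continuousOn⟩

variable {A B : ℝ} {f f1 f2 : ℝ → ℝ}

lemma C2.c (h : C2 A B f f1 f2) : ContinuousOn f (Icc A B) :=
  fun x hx => (h.d1 x hx).continuousWithinAt

lemma C2.c1 (h : C2 A B f f1 f2) : ContinuousOn f1 (Icc A B) :=
  fun x hx => (h.d2 x hx).continuousWithinAt

lemma C2.neg (h : C2 A B f f1 f2) : C2 A B (fun x => - f x) (fun x => - f1 x) (fun x => - f2 x) :=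
  ⟨fun x hx => (h.d1 x hx).neg, fun x hx => (h.d2 x hx).neg, h.c2.neg⟩

lemma dd3_neg (f : ℝ → ℝ) (x y z : ℝ) : dd3 (fun x => - f x) x y z = - dd3 f x y z := by
  unfold dd3; split_ifs <;> ring

lemma C2.le_dd3 (h : C2 A B f f1 f2) {x y z m : ℝ} (hx : A ≤ x) (hxy : x < y) (hyz : y < z)
    (hz : z ≤ B) (hm : ∀ t ∈ Icc x z, m ≤ f2 t) : m / 2 ≤ dd3 f x y z := by
  have hsub : Icc x z ⊆ Icc A B := Icc_subset_Icc hx hz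
  have hconv : ConvexOn ℝ (Icc x z) (fun t => f t - m / 2 * t ^ 2) := by
    refine convexOn_of_hasDerivWithinAt2_nonneg (f' := fun t => f1 t - m * t)
      (f'' := fun t => f2 t - m) (convex_Icc x z) ?_ ?_ ?_ ?_
    · exact (h.c.mono hsub).sub (by fun_prop)
    · intro t ht
      have ht' := interior_subset ht
      have h1 := (h.d1 t (hsub ht')).mono (interior_subset.trans hsub)
      have h2 : HasDerivAt (fun t : ℝ => m / 2 * t ^ 2) (m * t) t := by
        have := (hasDerivAt_pow 2 t).const_mul (m / 2)
        exact this.congr_deriv (by push_cast; ring)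
      exact h1.sub h2.hasDerivWithinAt
    · intro t ht
      have ht' := interior_subset ht
      have h1 := (h.d2 t (hsub ht')).mono (interior_subset.trans hsub)
      have h2 : HasDerivAt (fun t : ℝ => m * t) m t := by
        simpa using (hasDerivAt_id t).const_mul m
      exact h1.sub h2.hasDerivWithinAt
    · intro t ht
      have := hm t (interior_subset ht)
      linarith
  have hs := hconv.slope_mono_adjacent (x := x) (y := y) (z := z) ⟨le_rfl, by linarith⟩
    ⟨by linarith, le_rfl⟩ hxy hyz
  unfold dd3
  rw [if_pos ⟨hxy, hyz⟩, le_div_iff₀ (by linarith)]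
  have e1 : (f y - m / 2 * y ^ 2 - (f x - m / 2 * x ^ 2)) / (y - x)
      = (f y - f x) / (y - x) - m / 2 * (y + x) := by
    have : y - x ≠ 0 := by linarith
    field_simp; ring
  have e2 : (f z - m / 2 * z ^ 2 - (f y - m / 2 * y ^ 2)) / (z - y)
      = (f z - f y) / (z - y) - m / 2 * (z + y) := by
    have : z - y ≠ 0 := by linarith
    field_simp; ring
  simp only [e1, e2] at hs
  linarith

lemma C2.dd3_le (h : C2 A B f f1 f2) {x y z m : ℝ} (hx : A ≤ x) (hxy : x < y) (hyz : y < z)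
    (hz : z ≤ B) (hm : ∀ t ∈ Icc x z, f2 t ≤ m) : dd3 f x y z ≤ m / 2 := by
  have := h.neg.le_dd3 hx hxy hyz hz (m := -m) (fun t ht => by have := hm t ht; linarith)
  rw [dd3_neg] at this; linarith

lemma C2.bound (h : C2 A B f f1 f2) : ∃ K > 0, (∀ x ∈ Icc A B, |f x| ≤ K) ∧
    (∀ x ∈ Icc A B, |f1 x| ≤ K) ∧ (∀ x ∈ Icc A B, |f2 x| ≤ K) := by
  obtain ⟨a, ha⟩ := isCompact_Icc.exists_bound_of_continuousOn h.c
  obtain ⟨b, hb⟩ := isCompact_Icc.exists_bound_of_continuousOn h.c1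
  obtain ⟨c, hc⟩ := isCompact_Icc.exists_bound_of_continuousOn h.c2
  refine ⟨max 1 (max a (max b c)), by positivity, fun x hx => ?_, fun x hx => ?_, fun x hx => ?_⟩
  · exact (ha x hx).trans (by simp)
  · exact (hb x hx).trans (by simp)
  · exact (hc x hx).trans (by simp)

lemma C2.lip (h : C2 A B f f1 f2) {K : ℝ} (hK : ∀ x ∈ Icc A B, |f1 x| ≤ K) {x y : ℝ}
    (hx : x ∈ Icc A B) (hy : y ∈ Icc A B) : |f y - f x| ≤ K * |y - x| :=
  (convex_Icc A B).norm_image_sub_le_of_norm_hasDerivWithin_le h.d1 hK hx hy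

lemma C2.abs_dd3_le (h : C2 A B f f1 f2) {K : ℝ} (hK0 : 0 ≤ K) (hK : ∀ x ∈ Icc A B, |f2 x| ≤ K)
    {x y z : ℝ} (hx : x ∈ Icc A B) (hz : z ∈ Icc A B) : |dd3 f x y z| ≤ K := by
  by_cases hc : x < y ∧ y < z
  · have h1 := h.le_dd3 hx.1 hc.1 hc.2 hz.2 (m := -K) (fun t ht =>
      (abs_le.1 (hK t ⟨hx.1.trans ht.1, ht.2.trans hz.2⟩)).1)
    have h2 := h.dd3_le hx.1 hc.1 hc.2 hz.2 (m := K) (fun t ht =>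
      (abs_le.1 (hK t ⟨hx.1.trans ht.1, ht.2.trans hz.2⟩)).2)
    rw [abs_le]; constructor <;> linarith
  · simp [dd3, hc, hK0]

lemma C2.abs_dd2_le (h : C2 A B f f1 f2) {K : ℝ} (hK0 : 0 ≤ K) (hK : ∀ x ∈ Icc A B, |f1 x| ≤ K)
    {x y : ℝ} (hx : x ∈ Icc A B) (hy : y ∈ Icc A B) : |dd2 f x y| ≤ K := by
  unfold dd2
  rw [abs_div]
  exact div_le_of_le_mul₀ (abs_nonneg _) hK0 (h.lip hK hx hy)

/-- quadratic bound near a tangency -/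
lemma C2.tangent (h : C2 A B f f1 f2) {K : ℝ} (hK : ∀ x ∈ Icc A B, |f2 x| ≤ K) {t s : ℝ}
    (ht : t ∈ Icc A B) (hs : s ∈ Icc A B) (h0 : f1 t = 0) : |f s - f t| ≤ K * (s - t) ^ 2 := by
  have h1 : ∀ x ∈ Icc A B, |f1 x| ≤ K * |x - t| := fun x hx => by
    have := (convex_Icc A B).norm_image_sub_le_of_norm_hasDerivWithin_le h.d2 hK ht hx
    simpa [h0] using this
  have hK0 : 0 ≤ K := (abs_nonneg _).trans (hK t ht)
  have hsub : uIcc t s ⊆ Icc A B := by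
    intro x hx; exact ordConnected_Icc.uIcc_subset ht hs hx
  have h2 := (convex_uIcc t s).norm_image_sub_le_of_norm_hasDerivWithin_le (C := K * |s - t|)
    (fun x hx => (h.d1 x (hsub hx)).mono hsub) (fun x hx => by
      refine (h1 x (hsub hx)).trans ?_
      exact mul_le_mul_of_nonneg_left (abs_sub_left_of_mem_uIcc hx) hK0) left_mem_uIcc right_mem_uIcc
  rw [Real.norm_eq_abs, Real.norm_eq_abs] at h2
  rw [← sq_abs]; nlinarith

end GX
end

section
open MeasureTheory ProbabilityTheory Set Filter Topology
open scoped NNReal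

namespace GX
variable {A B : ℝ} {f f1 f2 : ℝ → ℝ}

/-- second order Taylor quotient at `t₀` from the left, lower bound -/
lemma C2.le_taylor (h : C2 A B f f1 f2) {s t m : ℝ} (hs : A ≤ s) (hst : s < t) (ht : t ≤ B)
    (hm : ∀ x ∈ Icc s t, m ≤ f2 x) :
    m / 2 ≤ (f s - f t - f1 t * (s - t)) / (s - t) ^ 2 := by
  have htm : t ∈ Icc A B := ⟨hs.trans hst.le, ht⟩
  have hd : HasDerivWithinAt f (f1 t) (Ioo s t) t :=
    (h.d1 t htm).mono (fun x hx => ⟨hs.trans hx.1.le, hx.2.le.trans ht⟩)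
  have hne : (𝓝[Ioo s t] t).NeBot := by
    rw [← mem_closure_iff_nhdsWithin_neBot, closure_Ioo hst.ne]; exact ⟨hst.le, le_rfl⟩
  have h1 : Tendsto (fun y => (f t - f y) / (t - y)) (𝓝[Ioo s t] t) (𝓝 (f1 t)) := by
    have := (hasDerivWithinAt_iff_tendsto_slope' (by simp)).1 hd
    refine this.congr (fun y => ?_)
    rw [slope_def_field, ← neg_sub, ← neg_sub t y, neg_div_neg_eq]
  have h2 : Tendsto (fun y => (f y - f s) / (y - s)) (𝓝[Ioo s t] t)
      (𝓝 ((f t - f s) / (t - s))) := by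
    refine Tendsto.div (hd.continuousWithinAt.tendsto.sub_const _) ?_ (by linarith)
    exact ((continuous_id.sub continuous_const).tendsto t).mono_left nhdsWithin_le_nhds
  have h3 := (h1.sub h2).div_const (t - s)
  have h4 : m / 2 ≤ (f1 t - (f t - f s) / (t - s)) / (t - s) := by
    refine ge_of_tendsto h3 ?_
    filter_upwards [self_mem_nhdsWithin] with y hy
    have := h.le_dd3 hs hy.1 hy.2 ht hm
    simpa [dd3, hy.1, hy.2] using this
  convert h4 using 1
  have : s - t ≠ 0 := by linarith
  have : t - s ≠ 0 := by linarith
  field_simp; ring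

lemma C2.taylor_le (h : C2 A B f f1 f2) {s t m : ℝ} (hs : A ≤ s) (hst : s < t) (ht : t ≤ B)
    (hm : ∀ x ∈ Icc s t, f2 x ≤ m) :
    (f s - f t - f1 t * (s - t)) / (s - t) ^ 2 ≤ m / 2 := by
  have := h.neg.le_taylor hs hst ht (m := -m) (fun x hx => by have := hm x hx; linarith)
  have e : (-f s - -f t - -f1 t * (s - t)) / (s - t) ^ 2
      = - ((f s - f t - f1 t * (s - t)) / (s - t) ^ 2) := by ring
  rw [e] at this; linarith

lemma C2.near (h : C2 A B f f1 f2) {t : ℝ} (ht : t ∈ Icc A B) {e : ℝ} (he : 0 < e) :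
    ∃ η > 0, ∀ x ∈ Icc A B, |x - t| < η → |f2 x - f2 t| < e := by
  have := Metric.continuousWithinAt_iff.1 (h.c2 t ht) e he
  obtain ⟨η, h1, h2⟩ := this
  exact ⟨η, h1, fun x hx hxt => h2 hx hxt⟩

lemma C2.tendsto_dd3 (h : C2 A B f f1 f2) {t : ℝ} (ht : t ∈ Icc A B) {x y z : ℕ → ℝ}
    (hx : ∀ n, x n ∈ Icc A B) (hz : ∀ n, z n ∈ Icc A B) (hxy : ∀ n, x n < y n)
    (hyz : ∀ n, y n < z n) (hxt : Tendsto x atTop (𝓝 t)) (hzt : Tendsto z atTop (𝓝 t)) :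
    Tendsto (fun n => dd3 f (x n) (y n) (z n)) atTop (𝓝 (f2 t / 2)) := by
  rw [Metric.tendsto_atTop]
  intro e he
  obtain ⟨η, hη, hh⟩ := h.near ht he
  have h1 := Metric.tendsto_atTop.1 hxt η hη
  have h2 := Metric.tendsto_atTop.1 hzt η hη
  obtain ⟨N1, h1⟩ := h1
  obtain ⟨N2, h2⟩ := h2
  refine ⟨max N1 N2, fun n hn => ?_⟩
  have h1 := abs_lt.1 (h1 n (le_of_max_le_left hn))
  have h2 := abs_lt.1 (h2 n (le_of_max_le_right hn))
  have hb : ∀ w ∈ Icc (x n) (z n), |f2 w - f2 t| < e := fun w hw =>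
    hh w ⟨(hx n).1.trans hw.1, hw.2.trans (hz n).2⟩ (by
      rw [abs_lt]; constructor <;> linarith [hw.1, hw.2])
  have l := h.le_dd3 (hx n).1 (hxy n) (hyz n) (hz n).2 (m := f2 t - e)
    (fun w hw => by linarith [(abs_lt.1 (hb w hw)).1])
  have u := h.dd3_le (hx n).1 (hxy n) (hyz n) (hz n).2 (m := f2 t + e)
    (fun w hw => by linarith [(abs_lt.1 (hb w hw)).2])
  rw [Real.dist_eq, abs_lt]; constructor <;> linarith

lemma C2.tendsto_taylor (h : C2 A B f f1 f2) {t : ℝ} (ht : t ∈ Icc A B) {x : ℕ → ℝ}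
    (hx : ∀ n, x n ∈ Icc A B) (hxt' : ∀ n, x n < t) (hxt : Tendsto x atTop (𝓝 t)) :
    Tendsto (fun n => (f (x n) - f t - f1 t * (x n - t)) / (x n - t) ^ 2) atTop
      (𝓝 (f2 t / 2)) := by
  rw [Metric.tendsto_atTop]
  intro e he
  obtain ⟨η, hη, hh⟩ := h.near ht he
  obtain ⟨N1, h1⟩ := Metric.tendsto_atTop.1 hxt η hη
  refine ⟨N1, fun n hn => ?_⟩
  have h1 := abs_lt.1 (h1 n hn)
  have hb : ∀ w ∈ Icc (x n) t, |f2 w - f2 t| < e := fun w hw =>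
    hh w ⟨(hx n).1.trans hw.1, hw.2.trans ht.2⟩ (by
      rw [abs_lt]; constructor <;> linarith [hw.1, hw.2])
  have l := h.le_taylor (hx n).1 (hxt' n) ht.2 (m := f2 t - e)
    (fun w hw => by linarith [(abs_lt.1 (hb w hw)).1])
  have u := h.taylor_le (hx n).1 (hxt' n) ht.2 (m := f2 t + e)
    (fun w hw => by linarith [(abs_lt.1 (hb w hw)).2])
  rw [Real.dist_eq, abs_lt]; constructor <;> linarith

lemma exists_rat_right {g : ℝ → ℝ} {s y v : ℝ} (hsy : s < y) (hg : ContinuousWithinAt g (Icc s y) s)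
    (hv : v < g s) : ∃ p : ℚ, s < p ∧ (p : ℝ) < y ∧ v < g p := by
  have h1 : ∀ᶠ x in 𝓝[Ioo s y] s, v < g x :=
    (hg.mono Ioo_subset_Icc_self).tendsto.eventually (lt_mem_nhds hv)
  rw [eventually_nhdsWithin_iff, Metric.eventually_nhds_iff] at h1
  obtain ⟨η, hη, h1⟩ := h1
  obtain ⟨p, hp1, hp2⟩ := exists_rat_btwn (show s < min y (s + η) by simp [hsy, hη])
  have := lt_min_iff.1 hp2
  refine ⟨p, hp1, this.1, h1 ?_ ⟨hp1, this.1⟩⟩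
  rw [Real.dist_eq, abs_lt]; constructor <;> linarith [this.2]

lemma exists_rat_left {g : ℝ → ℝ} {s y v : ℝ} (hsy : y < s) (hg : ContinuousWithinAt g (Icc y s) s)
    (hv : v < g s) : ∃ p : ℚ, y < p ∧ (p : ℝ) < s ∧ v < g p := by
  have h1 : ∀ᶠ x in 𝓝[Ioo y s] s, v < g x :=
    (hg.mono Ioo_subset_Icc_self).tendsto.eventually (lt_mem_nhds hv)
  rw [eventually_nhdsWithin_iff, Metric.eventually_nhds_iff] at h1
  obtain ⟨η, hη, h1⟩ := h1
  obtain ⟨p, hp1, hp2⟩ := exists_rat_btwn (show max y (s - η) < s by simp [hsy, hη])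
  have := max_lt_iff.1 hp1
  refine ⟨p, this.1, hp2, h1 ?_ ⟨this.1, hp2⟩⟩
  rw [Real.dist_eq, abs_lt]; constructor <;> linarith [this.2]

/-- two up-crossings force a positive second divided difference at rational points -/
lemma C2.two_crossings (h : C2 A B f f1 f2) {a b s t u : ℝ} (ha : A ≤ a) (hb : b ≤ B)
    (hs : s ∈ Icc a b) (ht : t ∈ Icc a b) (hst : s < t) (hfs : f s = u) (hft : f t = u)
    (h1 : 0 < f1 t) : ∃ x y z : ℚ, (x : ℝ) ∈ Icc a b ∧ (y : ℝ) ∈ Icc a b ∧ (z : ℝ) ∈ Icc a b ∧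
      0 < dd3 f x y z := by
  have hI : Icc a b ⊆ Icc A B := Icc_subset_Icc ha hb
  obtain ⟨y, hy, hfy⟩ : ∃ y ∈ Ioo s t, f y < u := by
    by_contra! hcon
    have hd : HasDerivWithinAt f (f1 t) (Ioo s t) t :=
      (h.d1 t (hI ht)).mono (fun x hx => hI ⟨hs.1.trans hx.1.le, hx.2.le.trans ht.2⟩)
    have hne : (𝓝[Ioo s t] t).NeBot := by
      rw [← mem_closure_iff_nhdsWithin_neBot, closure_Ioo hst.ne]; exact ⟨hst.le, le_rfl⟩
    have := (hasDerivWithinAt_iff_tendsto_slope' (by simp)).1 hd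
    have h2 : f1 t ≤ 0 := by
      refine le_of_tendsto this ?_
      filter_upwards [self_mem_nhdsWithin] with y hy
      rw [slope_def_field]
      exact div_nonpos_of_nonneg_of_nonpos (by linarith [hcon y hy]) (by linarith [hy.2])
    linarith
  have cont : ∀ p q w : ℝ, a ≤ p → q ≤ b → w ∈ Icc p q → ContinuousWithinAt f (Icc p q) w :=
    fun p q w hp hq hw => (h.c w (hI ⟨hp.trans hw.1, hw.2.trans hq⟩)).mono
      (fun x hx => hI ⟨hp.trans hx.1, hx.2.trans hq⟩)
  obtain ⟨v, hv1, hv2⟩ := exists_between hfy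
  obtain ⟨q, hq1, hq2, hq3⟩ := exists_rat_right (g := fun x => - f x) (v := -v) hy.2
    (cont y t y (by linarith [hs.1, hy.1]) ht.2 ⟨le_rfl, hy.2.le⟩).neg (by linarith)
  obtain ⟨p, hp1, hp2, hp3⟩ := exists_rat_right (g := f) (v := v) (s := s) (y := q)
    (by linarith [hy.1])
    (cont s q s hs.1 (by linarith [ht.2]) ⟨le_rfl, by linarith [hy.1]⟩) (by linarith)
  obtain ⟨w, hw1, hw2, hw3⟩ := exists_rat_left (g := f) (v := v) (s := t) (y := q) hq2
    (cont q t t (by linarith [hs.1, hy.1]) ht.2 ⟨hq2.le, le_rfl⟩) (by linarith)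
  refine ⟨p, q, w, ⟨by linarith [hs.1], by linarith [ht.2]⟩, ⟨by linarith [hs.1], by linarith [ht.2]⟩,
    ⟨by linarith [hs.1], by linarith [ht.2]⟩, ?_⟩
  unfold dd3
  rw [if_pos ⟨hp2, hw1⟩]
  have e1 : 0 < (f w - f q) / (w - q) := div_pos (by linarith) (by linarith)
  have e2 : (f q - f p) / (q - p) < 0 := div_neg_of_neg_of_pos (by linarith) (by linarith)
  exact div_pos (by linarith) (by linarith)

/-- first hitting without tangency gives an up-crossing -/
lemma C2.hit (h : C2 A B f f1 f2) {a b u : ℝ} (ha : A ≤ a) (hb : b ≤ B)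
    (hfa : f a < u) (hex : ∃ t ∈ Icc a b, u ≤ f t) (hnt : ∀ t ∈ Icc a b, f t = u → f1 t ≠ 0) :
    ∃ t ∈ Icc a b, f t = u ∧ 0 < f1 t := by
  have hI : Icc a b ⊆ Icc A B := Icc_subset_Icc ha hb
  have hc := h.c.mono hI
  have hcl : IsCompact (Icc a b ∩ f ⁻¹' (Ici u)) :=
    isCompact_Icc.of_isClosed_subset (hc.preimage_isClosed_of_isClosed isClosed_Icc isClosed_Ici)
      inter_subset_left
  obtain ⟨τ, ⟨hτ1, hτ2⟩, hmin⟩ := hcl.exists_isLeast (by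
    obtain ⟨t, h1, h2⟩ := hex; exact ⟨t, h1, h2⟩)
  have hτ2 : u ≤ f τ := hτ2
  have hlt : ∀ s ∈ Ico a τ, f s < u := fun s hs => by
    by_contra hcon
    have : τ ≤ s := hmin ⟨⟨hs.1, hs.2.le.trans hτ1.2⟩, not_lt.1 hcon⟩
    exact absurd this (not_le.2 hs.2)
  have haτ : a < τ := by
    rcases hτ1.1.lt_or_eq with h' | h'
    · exact h'
    · rw [← h'] at hτ2; linarith
  have hne : (𝓝[Ioo a τ] τ).NeBot := by
    rw [← mem_closure_iff_nhdsWithin_neBot, closure_Ioo haτ.ne]; exact ⟨haτ.le, le_rfl⟩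
  have hd : HasDerivWithinAt f (f1 τ) (Ioo a τ) τ :=
    (h.d1 τ (hI hτ1)).mono (fun x hx => hI ⟨hx.1.le, hx.2.le.trans hτ1.2⟩)
  have heq : f τ = u := by
    refine le_antisymm ?_ hτ2
    refine le_of_tendsto hd.continuousWithinAt.tendsto ?_
    filter_upwards [self_mem_nhdsWithin] with y hy using (hlt y ⟨hy.1.le, hy.2⟩).le
  refine ⟨τ, hτ1, heq, lt_of_le_of_ne ?_ (hnt τ hτ1 heq).symm⟩
  refine ge_of_tendsto ((hasDerivWithinAt_iff_tendsto_slope' (by simp)).1 hd) ?_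
  filter_upwards [self_mem_nhdsWithin] with y hy
  rw [slope_def_field]
  exact div_nonneg_of_nonpos (by linarith [hlt y ⟨hy.1.le, hy.2⟩]) (by linarith [hy.2])

/-- lower bound of the time spent near the level by the number of crossings -/
lemma count_le {a b K u : ℝ} (hab : a < b) (hK : 0 < K) {g : ℝ → ℝ}
    (hg : ∀ x ∈ Icc a b, ∀ y ∈ Icc a b, |g y - g x| ≤ K * |y - x|)
    {U : Set ℝ} (hU : IsOpen U) (F : Finset ℝ) (hF : ∀ t ∈ F, t ∈ Icc a b ∧ t ∈ U ∧ g t = u) :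
    ∃ ε₀ > 0, ∀ ε, 0 < ε → ε < ε₀ →
      (F.card : ENNReal) * ENNReal.ofReal (ε / K) ≤
        volume {t | t ∈ Icc a b ∧ t ∈ U ∧ |g t - u| < ε} := by
  -- common radius
  obtain ⟨η, hη, hball, hdisj⟩ : ∃ η > 0, (∀ t ∈ F, Metric.ball t η ⊆ U) ∧
      (∀ s ∈ F, ∀ t ∈ F, s ≠ t → 2 * η ≤ |s - t|) := by
    have h1 : ∀ t : ℝ, ∃ η > 0, t ∈ F → Metric.ball t η ⊆ U := fun t => by
      by_cases ht : t ∈ F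
      · obtain ⟨η, h1, h2⟩ := Metric.isOpen_iff.1 hU t (hF t ht).2.1
        exact ⟨η, h1, fun _ => h2⟩
      · exact ⟨1, one_pos, fun h => absurd h ht⟩
    choose e he1 he2 using h1
    obtain ⟨η1, hη1, h1⟩ : ∃ η > 0, ∀ t ∈ F, η ≤ e t := by
      rcases F.eq_empty_or_nonempty with rfl | hne
      · exact ⟨1, one_pos, by simp⟩
      · obtain ⟨m, hm, hmin⟩ := F.exists_min_image e hne
        exact ⟨e m, he1 m, hmin⟩
    obtain ⟨η2, hη2, h2⟩ : ∃ η > 0, ∀ p ∈ F.offDiag, η ≤ |p.1 - p.2| := by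
      rcases F.offDiag.eq_empty_or_nonempty with h0 | hne
      · exact ⟨1, one_pos, by simp [h0]⟩
      · obtain ⟨m, hm, hmin⟩ := F.offDiag.exists_min_image (fun p => |p.1 - p.2|) hne
        refine ⟨|m.1 - m.2|, abs_pos.2 (sub_ne_zero.2 (Finset.mem_offDiag.1 hm).2.2), hmin⟩
    refine ⟨min η1 (η2 / 2), by positivity, fun t ht => ?_, fun s hs t ht hst => ?_⟩
    · exact (Metric.ball_subset_ball ((min_le_left _ _).trans (h1 t ht))).trans (he2 t ht)
    · have := h2 (s, t) (Finset.mem_offDiag.2 ⟨hs, ht, hst⟩)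
      have h3 := min_le_right η1 (η2 / 2)
      simp only at this
      linarith
  refine ⟨K * min η ((b - a) / 2), by have : 0 < b - a := by linarith
                                      positivity, fun ε hε hε2 => ?_⟩
  set d := ε / K with hd
  have hd0 : 0 < d := by positivity
  have hdlt : d < min η ((b - a) / 2) := by rw [hd, div_lt_iff₀ hK]; linarith
  obtain ⟨hdη, hdab⟩ := lt_min_iff.1 hdlt
  let V : ℝ → Set ℝ := fun t => if t ≤ (a + b) / 2 then Ioo t (t + d) else Ioo (t - d) t
  have hVv : ∀ t, volume (V t) = ENNReal.ofReal d := fun t => by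
    simp only [V]; split_ifs <;> simp
  have hVb : ∀ t, ∀ x ∈ V t, |x - t| < d := fun t x hx => by
    simp only [V] at hx
    split_ifs at hx <;> rw [abs_lt] <;> constructor <;> linarith [hx.1, hx.2]
  have hVm : ∀ t, MeasurableSet (V t) := fun t => by
    simp only [V]; split_ifs <;> exact measurableSet_Ioo
  calc (F.card : ENNReal) * ENNReal.ofReal d = ∑ t ∈ F, volume (V t) := by simp [hVv]
    _ = volume (⋃ t ∈ F, V t) := by
        rw [measure_biUnion_finset ?_ (fun t _ => hVm t)]
        intro s hs t ht hst
        rw [Function.onFun, Set.disjoint_left]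
        intro x hx hx'
        have h1 := hdisj s hs t ht hst
        have h2 := abs_lt.1 (hVb s x hx)
        have h3 := abs_lt.1 (hVb t x hx')
        have : |s - t| < 2 * η := by rw [abs_lt]; constructor <;> linarith
        linarith
    _ ≤ _ := by
        refine measure_mono (iUnion₂_subset fun t ht x hx => ?_)
        have hxt := hVb t x hx
        obtain ⟨h1, h2, h3⟩ := hF t ht
        have hxI : x ∈ Icc a b := by
          simp only [V] at hx
          split_ifs at hx with hc
          · exact ⟨by linarith [hx.1, h1.1], by linarith [hx.2]⟩
          · exact ⟨by linarith [hx.1, not_le.1 hc], by linarith [hx.2, h1.2]⟩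
        refine ⟨hxI, hball t ht ?_, ?_⟩
        · rw [Metric.mem_ball, Real.dist_eq]; linarith
        · have := hg t h1 x hxI
          rw [h3] at this
          refine this.trans_lt ?_
          calc K * |x - t| < K * d := by gcongr
            _ = ε := by rw [hd]; field_simp

/-- time spent near the level at a tangency -/
lemma C2.tangent_time (h : C2 A B f f1 f2) {a b K t u : ℝ} (ha : A ≤ a) (hb : b ≤ B) (hab : a < b)
    (hK0 : 0 < K) (hK : ∀ x ∈ Icc A B, |f2 x| ≤ K)
    (ht : t ∈ Icc a b) (hft : f t = u) (h0 : f1 t = 0) {d : ℝ} (hd0 : 0 < d)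
    (hd : d < (b - a) / 2) :
    ENNReal.ofReal d ≤ volume {s | s ∈ Icc a b ∧ |f s - u| < K * d ^ 2} := by
  have hI : Icc a b ⊆ Icc A B := Icc_subset_Icc ha hb
  have key : ∀ x ∈ Icc a b, |x - t| < d → |f x - u| < K * d ^ 2 := fun x hx hxd => by
    have := h.tangent hK (hI ht) (hI hx) h0
    rw [hft] at this
    refine this.trans_lt ?_
    have h2 : (x - t) ^ 2 < d ^ 2 := sq_lt_sq' (abs_lt.1 hxd).1 (abs_lt.1 hxd).2
    gcongr
  by_cases hc : t ≤ (a + b) / 2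
  · calc ENNReal.ofReal d = volume (Ioo t (t + d)) := by simp
      _ ≤ _ := measure_mono fun x hx => by
        have hxI : x ∈ Icc a b := ⟨by linarith [hx.1, ht.1], by linarith [hx.2]⟩
        exact ⟨hxI, key x hxI (by rw [abs_lt]; constructor <;> linarith [hx.1, hx.2])⟩
  · calc ENNReal.ofReal d = volume (Ioo (t - d) t) := by simp
      _ ≤ _ := measure_mono fun x hx => by
        have hxI : x ∈ Icc a b := ⟨by linarith [hx.1, not_le.1 hc], by linarith [hx.2, ht.2]⟩
        exact ⟨hxI, key x hxI (by rw [abs_lt]; constructor <;> linarith [hx.1, hx.2])⟩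

end GX
end

section
open MeasureTheory ProbabilityTheory Set Filter Topology
open scoped NNReal ENNReal

namespace GX
set_option linter.unusedSectionVars false

/-- A centered Gaussian space of random variables. -/
structure GS {Ω : Type*} [MeasurableSpace Ω] (P : Measure Ω) (V : Submodule ℝ (Ω → ℝ)) : Prop where
  meas : ∀ f ∈ V, Measurable f
  law : ∀ f ∈ V, ∃ v : ℝ≥0, P.map f = gaussianReal 0 v

variable {Ω : Type*} [MeasurableSpace Ω] {P : Measure Ω} [IsProbabilityMeasure P]
  {V : Submodule ℝ (Ω → ℝ)}

lemma GS.integral_eq_zero (hV : GS P V) {f : Ω → ℝ} (hf : f ∈ V) : ∫ ω, f ω ∂P = 0 := by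
  obtain ⟨v, hv⟩ := hV.law f hf
  have : ∫ x, x ∂(P.map f) = ∫ ω, f ω ∂P :=
    integral_map (hV.meas f hf).aemeasurable (by fun_prop)
  rw [← this, hv]; exact integral_id_gaussianReal

lemma GS.memLp (hV : GS P V) {f : Ω → ℝ} (hf : f ∈ V) : MemLp f 2 P := by
  obtain ⟨v, hv⟩ := hV.law f hf
  have h := memLp_id_gaussianReal' (μ := 0) (v := v) 2 (by simp)
  rw [← hv] at h
  exact (memLp_map_measure_iff (by fun_prop) (hV.meas f hf).aemeasurable).1 h

lemma GS.law_eq (hV : GS P V) {f : Ω → ℝ} (hf : f ∈ V) :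
    P.map f = gaussianReal 0 (Real.toNNReal (∫ ω, f ω * f ω ∂P)) := by
  obtain ⟨v, hv⟩ := hV.law f hf
  rw [hv]; congr 1
  have h1 : Var[f; P] = v := by
    have := variance_map (X := id) (Y := f) (μ := P) (by fun_prop) (hV.meas f hf).aemeasurable
    rw [hv, variance_id_gaussianReal] at this
    simpa using this.symm
  rw [variance_of_integral_eq_zero (hV.meas f hf).aemeasurable (hV.integral_eq_zero hf)] at h1
  rw [← NNReal.coe_inj, ← h1]
  simp_rw [← pow_two]
  rw [Real.coe_toNNReal _ (integral_nonneg fun ω => by positivity)]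

lemma GS.pi_gaussian (hV : GS P V) {ι : Type*} [Fintype ι] {Y : ι → Ω → ℝ} (hY : ∀ i, Y i ∈ V) :
    IsGaussian (P.map (fun ω i => Y i ω)) ∧
    ∀ L : StrongDual ℝ (ι → ℝ), ∫ x, L x ∂(P.map (fun ω i => Y i ω)) = 0 := by
  classical
  have hm : Measurable (fun ω i => Y i ω) := measurable_pi_iff.2 fun i => hV.meas _ (hY i)
  have key : ∀ L : StrongDual ℝ (ι → ℝ), (fun ω => L (fun i => Y i ω)) ∈ V := by
    intro L
    have : (fun ω => L (fun i => Y i ω)) = ∑ i, L (Pi.single i 1) • Y i := by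
      ext ω
      have h1 : (fun i => Y i ω) = ∑ i, Y i ω • (Pi.single i (1:ℝ) : ι → ℝ) := by
        ext j; simp [Finset.sum_apply, Pi.single_apply]
      rw [h1, map_sum]
      simp [mul_comm]
    rw [this]
    exact V.sum_mem fun i _ => V.smul_mem _ (hY i)
  refine ⟨isGaussian_of_map_eq_gaussianReal fun L => ?_, fun L => ?_⟩
  · obtain ⟨v, hv⟩ := hV.law _ (key L)
    refine ⟨0, v, ?_⟩
    rw [Measure.map_map (by fun_prop) hm]; exact hv
  · rw [integral_map hm.aemeasurable (by fun_prop)]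
    exact hV.integral_eq_zero (key L)

lemma GS.isGP (hV : GS P V) {ι : Type*} {Y : ι → Ω → ℝ} (hY : ∀ i, Y i ∈ V) :
    IsGaussianProcess Y P := ⟨fun I => ⟨(hV.pi_gaussian (Y := fun i : I => Y i) fun i => hY i).1⟩⟩

lemma GS.indep (hV : GS P V) {ι : Type*} {f : Ω → ℝ} (hf : f ∈ V) {Y : ι → Ω → ℝ}
    (hY : ∀ i, Y i ∈ V) (h : ∀ i, ∫ ω, f ω * Y i ω ∂P = 0) :
    IndepFun f (fun ω i => Y i ω) P := by
  have h1 : IsGaussianProcess (Sum.elim (fun _ : Unit => f) Y) P :=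
    hV.isGP (by rintro (i | i); exacts [hf, hY i])
  have h2 := h1.indepFun_of_covariance_eq_zero (fun _ => (hV.meas f hf).aemeasurable)
    (fun i => (hV.meas _ (hY i)).aemeasurable) (fun _ i => by
      rw [covariance_eq_sub (hV.memLp hf) (hV.memLp (hY i)), hV.integral_eq_zero hf]
      simpa using h i)
  exact h2.comp (φ := fun g : Unit → ℝ => g ()) (ψ := id) (measurable_pi_apply _) measurable_id

lemma fernique_const : ∃ c > 0, ∃ M < (⊤:ℝ≥0∞), ∀ {ι : Type} [Fintype ι] (μ : Measure (ι → ℝ))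
    [IsGaussian μ], (∀ L : StrongDual ℝ (ι → ℝ), ∫ x, L x ∂μ = 0) → ∀ a,
    ENNReal.ofReal (3/4) ≤ μ {x | ‖x‖ ≤ a} →
    ∫⁻ x, ENNReal.ofReal (Real.exp (c * a⁻¹^2 * ‖x‖^2)) ∂μ ≤ M := by
  have h34 : (2:ℝ≥0∞)⁻¹ < ENNReal.ofReal (3/4) := by
    rw [show (2:ℝ≥0∞)⁻¹ = ENNReal.ofReal (1/2) by simp [ENNReal.ofReal_inv_of_pos]]
    exact (ENNReal.ofReal_lt_ofReal_iff (by norm_num)).2 (by norm_num)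
  refine ⟨Fernique.logRatio (ENNReal.ofReal (3/4)), Fernique.logRatio_pos h34 ?_, _, ?_,
    fun {ι} _ μ _ hL a ha => lintegral_exp_mul_sq_norm_le_of_map_rotation_eq_self
      (IsGaussian.map_rotation_eq_self_of_forall_strongDual_eq_zero hL _) ha h34⟩
  · rw [← ENNReal.ofReal_one]; exact (ENNReal.ofReal_lt_ofReal_iff (by norm_num)).2 (by norm_num)
  · refine ENNReal.add_lt_top.mpr ⟨ENNReal.ofReal_lt_top, ?_⟩
    refine Summable.tsum_ofReal_lt_top <|
      Real.summable_exp_nat_mul_of_ge ?_ (fun i ↦ mod_cast (Nat.lt_pow_self (by simp)).le)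
    refine mul_neg_of_neg_of_pos (by simp) (Real.log_pos ?_)
    rw [← ENNReal.ofReal_one, ← ENNReal.ofReal_sub _ (by norm_num), ← ENNReal.ofReal_div_of_pos (by norm_num),
      ENNReal.toReal_ofReal (by norm_num)]
    norm_num

/-- Supremum of a family. -/
noncomputable def sup (Y : ℕ → Ω → ℝ) (ω : Ω) : ℝ := ⨆ n, |Y n ω|

lemma measurable_sup {Y : ℕ → Ω → ℝ} (hY : ∀ n, Measurable (Y n)) : Measurable (sup Y) :=
  Measurable.iSup fun n => (hY n).abs

lemma le_sup {Y : ℕ → Ω → ℝ} (hb : ∀ ω, BddAbove (range fun n => |Y n ω|)) (n : ℕ) (ω : Ω) :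
    |Y n ω| ≤ sup Y ω := le_ciSup (hb ω) n

lemma sup_nonneg (Y : ℕ → Ω → ℝ) (ω : Ω) : 0 ≤ sup Y ω := Real.iSup_nonneg fun _ => abs_nonneg _

lemma exists_level {H : Ω → ℝ} (hH : Measurable H) :
    ∃ a > 0, ENNReal.ofReal (3/4) ≤ P {ω | H ω ≤ a} := by
  have h1 : Tendsto (fun n : ℕ => P {ω | H ω ≤ n}) atTop (𝓝 (P (⋃ n : ℕ, {ω | H ω ≤ n}))) :=
    tendsto_measure_iUnion_atTop (fun n m hnm ω hω => le_trans (show H ω ≤ n from hω) (Nat.cast_le.2 hnm))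
  have h2 : (⋃ n : ℕ, {ω | H ω ≤ n}) = univ := by
    ext ω; simpa using exists_nat_ge (H ω)
  rw [h2, measure_univ] at h1
  have h3 : ENNReal.ofReal (3/4) < 1 := by
    rw [← ENNReal.ofReal_one]; exact (ENNReal.ofReal_lt_ofReal_iff (by norm_num)).2 (by norm_num)
  obtain ⟨n, hn, hn1⟩ := ((h1.eventually (lt_mem_nhds h3)).and (eventually_gt_atTop 0)).exists
  exact ⟨n, by exact_mod_cast hn1, hn.le⟩

lemma GS.fernique (hV : GS P V) {Y : ℕ → Ω → ℝ} (hY : ∀ i, Y i ∈ V)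
    (hb : ∀ ω, BddAbove (range fun n => |Y n ω|)) :
    ∃ c > 0, ∫⁻ ω, ENNReal.ofReal (Real.exp (c * sup Y ω ^ 2)) ∂P < ⊤ := by
  obtain ⟨c, hc, M, hM, key⟩ := fernique_const
  obtain ⟨a, ha, hPa⟩ := exists_level (P := P) (measurable_sup fun n => hV.meas _ (hY n))
  refine ⟨c * a⁻¹^2, by positivity, lt_of_le_of_lt ?_ hM⟩
  set c' := c * a⁻¹^2 with hc'
  have hc'0 : 0 < c' := by positivity
  let Z : ℕ → Ω → ℝ := fun n ω => ‖(fun i : Fin n => Y i ω)‖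
  have hZm : ∀ n, Measurable (Z n) := fun n => by
    have : Measurable (fun ω (i : Fin n) => Y i ω) := measurable_pi_iff.2 fun i => hV.meas _ (hY i)
    exact this.norm
  have hZle : ∀ n ω, Z n ω ≤ sup Y ω := fun n ω =>
    (pi_norm_le_iff_of_nonneg (sup_nonneg _ _)).2 fun i => le_sup hb i ω
  have hZmono : ∀ ω, Monotone fun n => Z n ω := fun ω n m hnm =>
    (pi_norm_le_iff_of_nonneg (norm_nonneg _)).2 fun i =>
      norm_le_pi_norm (fun i : Fin m => Y i ω) (Fin.castLE hnm i)
  have hZlim : ∀ ω, Tendsto (fun n => Z n ω) atTop (𝓝 (sup Y ω)) := fun ω => by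
    refine tendsto_atTop_isLUB (hZmono ω) ⟨?_, fun b hb' => ciSup_le fun n => ?_⟩
    · rintro _ ⟨n, rfl⟩; exact hZle n ω
    · exact (norm_le_pi_norm (fun i : Fin (n+1) => Y i ω) (Fin.last n)).trans (hb' ⟨n+1, rfl⟩)
  have hstep : ∀ n, ∫⁻ ω, ENNReal.ofReal (Real.exp (c' * Z n ω ^ 2)) ∂P ≤ M := by
    intro n
    obtain ⟨hg, hL⟩ := hV.pi_gaussian (Y := fun i : Fin n => Y i) fun i => hY i
    have hm : Measurable (fun ω (i : Fin n) => Y i ω) := measurable_pi_iff.2 fun i => hV.meas _ (hY i)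
    have := key _ hL a (by
      rw [Measure.map_apply hm (measurableSet_le measurable_norm measurable_const)]
      exact hPa.trans (measure_mono fun ω hω => (hZle n ω).trans hω))
    rwa [lintegral_map (by fun_prop) hm] at this
  have hlim := lintegral_tendsto_of_tendsto_of_monotone (μ := P)
    (f := fun n ω => ENNReal.ofReal (Real.exp (c' * Z n ω ^ 2)))
    (F := fun ω => ENNReal.ofReal (Real.exp (c' * sup Y ω ^ 2)))
    (fun n => (by have := hZm n; fun_prop)) (ae_of_all _ fun ω n m hnm => by
      apply ENNReal.ofReal_le_ofReal; apply Real.exp_le_exp.2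
      have := hZmono ω hnm
      have h0 : 0 ≤ Z n ω := norm_nonneg _
      simp only at this
      gcongr)
    (ae_of_all _ fun ω => by
      have := hZlim ω
      exact (ENNReal.continuous_ofReal.comp (Real.continuous_exp.comp
        (continuous_const.mul (continuous_id.pow 2)))).continuousAt.tendsto.comp this)
  exact le_of_tendsto' hlim hstep

end GX
end

section
open MeasureTheory ProbabilityTheory Set Filter Topology
open scoped NNReal ENNReal

namespace GX
set_option linter.unusedSectionVars false
set_option linter.unusedVariables false

variable {Ω : Type*} [MeasurableSpace Ω] {P : Measure Ω} [IsProbabilityMeasure P]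
  {V : Submodule ℝ (Ω → ℝ)}

noncomputable def sbC (v₀ : ℝ) : ℝ := 2 / √(2 * Real.pi * v₀) * Real.exp (1 / v₀)

lemma sbC_pos {v₀ : ℝ} (h : 0 < v₀) : 0 < sbC v₀ := by
  unfold sbC
  have := Real.pi_pos
  have : 0 < √(2 * Real.pi * v₀) := Real.sqrt_pos.2 (by positivity)
  positivity

lemma GS.small_ball (hV : GS P V) {f : Ω → ℝ} (hf : f ∈ V) {v₀ s u ε : ℝ} (hv₀ : 0 < v₀)
    (h0 : v₀ ≤ ∫ ω, f ω * f ω ∂P) (hs : ∫ ω, f ω * f ω ∂P ≤ s) (hu : 0 ≤ u) (hε : 0 < ε)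
    (hεu : ε * u ≤ 1) :
    P {ω | |f ω - u| < ε} ≤ ENNReal.ofReal (ε * (sbC v₀ * Real.exp (-u^2 / (2 * s)))) := by
  have hlaw := hV.law_eq hf
  set v := ∫ ω, f ω * f ω ∂P with hv
  have hvpos : 0 < v := by linarith
  have hvne : Real.toNNReal v ≠ 0 := by simpa using hvpos
  have h1 : P {ω | |f ω - u| < ε} = gaussianReal 0 (Real.toNNReal v) (Ioo (u - ε) (u + ε)) := by
    rw [← hlaw, Measure.map_apply (hV.meas f hf) measurableSet_Ioo]
    congr 1; ext ω
    simp only [mem_ofPred_eq, mem_preimage, mem_Ioo, abs_lt]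
    constructor <;> rintro ⟨a, b⟩ <;> constructor <;> linarith
  rw [h1, gaussianReal_apply _ hvne]
  have hpi := Real.pi_pos
  have h2 : ∀ x ∈ Ioo (u - ε) (u + ε), gaussianPDF 0 (Real.toNNReal v) x ≤
      ENNReal.ofReal ((√(2 * Real.pi * v₀))⁻¹ * Real.exp (1 / v₀) * Real.exp (-u^2 / (2 * s))) := by
    intro x hx
    rw [gaussianPDF, gaussianPDFReal, mul_assoc _ (Real.exp (1 / v₀)), ← Real.exp_add]
    apply ENNReal.ofReal_le_ofReal
    rw [Real.coe_toNNReal _ hvpos.le, sub_zero]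
    have hx2 : u^2 - 2 ≤ x^2 := by
      have e : x^2 - u^2 = 2 * u * (x - u) + (x-u)^2 := by ring
      have : -(u*ε) ≤ u * (x - u) := by nlinarith [hx.1]
      nlinarith [sq_nonneg (x-u)]
    have ha : -x^2 / (2*v) ≤ 1/v₀ + -u^2/(2*s) := by
      have a1 : -x^2/(2*v) ≤ (2 - u^2)/(2*v) := by
        apply div_le_div_of_nonneg_right _ (by positivity); linarith
      have a2 : (2 - u^2)/(2*v) = 1/v + -(u^2/(2*v)) := by field_simp; ring
      have a3 : 1/v ≤ 1/v₀ := one_div_le_one_div_of_le hv₀ h0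
      have a4 : u^2/(2*s) ≤ u^2/(2*v) := by
        apply div_le_div_of_nonneg_left (by positivity) (by positivity); linarith
      rw [neg_div (2*s)]; linarith
    have hb : (√(2 * Real.pi * v))⁻¹ ≤ (√(2 * Real.pi * v₀))⁻¹ := by
      apply inv_anti₀ (Real.sqrt_pos.2 (by positivity))
      apply Real.sqrt_le_sqrt; nlinarith
    exact mul_le_mul hb (Real.exp_le_exp.2 ha) (Real.exp_pos _).le (by positivity)
  calc _ ≤ ∫⁻ x in Ioo (u - ε) (u + ε), ENNReal.ofReal ((√(2 * Real.pi * v₀))⁻¹ * Real.exp (1 / v₀) * Real.exp (-u^2 / (2 * s))) :=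
        setLIntegral_mono measurable_const h2
    _ = _ := by
        rw [setLIntegral_const, Real.volume_Ioo, ← ENNReal.ofReal_mul (by positivity)]
        congr 1; unfold sbC; rw [div_eq_mul_inv]; ring

lemma GS.tail_one (hV : GS P V) {f : Ω → ℝ} (hf : f ∈ V) {s u : ℝ} (hs0 : 0 < s)
    (hs : ∫ ω, f ω * f ω ∂P ≤ s) (hu : 0 ≤ u) :
    P {ω | u ≤ f ω} ≤ ENNReal.ofReal (Real.exp (-u^2 / (2 * s))) := by
  have hlaw := hV.law_eq hf
  have hv0 : 0 ≤ ∫ ω, f ω * f ω ∂P := integral_nonneg fun ω => mul_self_nonneg _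
  have hm := mgf_gaussianReal hlaw (u / s)
  have hi : Integrable (fun ω => Real.exp (u / s * f ω)) P := by
    have := integrable_exp_mul_gaussianReal (μ := 0) (v := Real.toNNReal (∫ ω, f ω * f ω ∂P)) (u/s)
    rw [← hlaw] at this
    exact (integrable_map_measure (by fun_prop) (hV.meas f hf).aemeasurable).1 this
  have h1 := measure_ge_le_exp_mul_mgf (μ := P) (X := f) u (div_nonneg hu hs0.le) hi
  rw [hm, ← Real.exp_add, Real.coe_toNNReal _ hv0] at h1
  rw [← ofReal_measureReal]
  apply ENNReal.ofReal_le_ofReal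
  refine h1.trans (Real.exp_le_exp.2 ?_)
  have h3 : (∫ ω, f ω * f ω ∂P) * (u/s)^2 / 2 ≤ s * (u/s)^2 / 2 := by gcongr
  have h4 : -(u/s) * u + s * (u/s)^2/2 = -u^2/(2*s) := by field_simp; ring
  linarith

lemma GS.tail (hV : GS P V) {f : Ω → ℝ} (hf : f ∈ V) {s u : ℝ} (hs0 : 0 < s)
    (hs : ∫ ω, f ω * f ω ∂P ≤ s) (hu : 0 ≤ u) :
    P {ω | u ≤ |f ω|} ≤ ENNReal.ofReal (2 * Real.exp (-u^2 / (2 * s))) := by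
  have h1 := hV.tail_one hf hs0 hs hu
  have h2 := hV.tail_one (V.neg_mem hf) hs0 (by simpa using hs) hu
  have h3 : {ω | u ≤ |f ω|} ⊆ {ω | u ≤ f ω} ∪ {ω | u ≤ (-f) ω} := by
    intro ω hω
    rcases le_abs.1 (show u ≤ |f ω| from hω) with h | h
    · exact Or.inl h
    · exact Or.inr h
  calc _ ≤ _ := measure_mono h3
    _ ≤ _ := measure_union_le _ _
    _ ≤ _ := add_le_add h1 h2
    _ = _ := by rw [← ENNReal.ofReal_add (by positivity) (by positivity)]; congr 1; ring

lemma GS.decouple (hV : GS P V) {Y : ℕ → Ω → ℝ} (hY : ∀ i, Y i ∈ V)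
    (hb : ∀ ω, BddAbove (range fun n => |Y n ω|)) {f : Ω → ℝ} (hf : f ∈ V) {v K : ℝ}
    (hv : ∫ ω, f ω * f ω ∂P = v) (hv0 : 0 < v) (hK : ∀ n, |∫ ω, f ω * Y n ω ∂P| ≤ K * v) :
    ∃ Z : Ω → ℝ, Measurable Z ∧ IndepFun f Z P ∧ (∀ ω, 0 ≤ Z ω) ∧
      (∀ ω, sup Y ω ≤ Z ω + K * |f ω|) ∧ (∀ ω, Z ω ≤ sup Y ω + K * |f ω|) ∧
      ∀ n c, ∫ ω, f ω * Y n ω ∂P ≤ - c * v → ∀ ω, 0 < f ω → 0 < Y n ω → c * f ω ≤ Z ω := by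
  set l : ℕ → ℝ := fun n => (∫ ω, f ω * Y n ω ∂P) / v with hl
  have hlK : ∀ n, |l n| ≤ K := fun n => by
    rw [hl]; simp only [abs_div, abs_of_pos hv0]
    rw [div_le_iff₀ hv0]; exact hK n
  set W : ℕ → Ω → ℝ := fun n ω => Y n ω - l n * f ω with hW
  have hWV : ∀ n, W n ∈ V := fun n => V.sub_mem (hY n) (V.smul_mem (l n) hf)
  have hWle : ∀ n ω, |W n ω| ≤ sup Y ω + K * |f ω| := fun n ω => by
    have h1 := abs_sub (Y n ω) (l n * f ω)
    rw [abs_mul] at h1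
    have h2 := le_sup hb n ω
    have h3 := mul_le_mul_of_nonneg_right (hlK n) (abs_nonneg (f ω))
    simp only [hW]; linarith
  have hWb : ∀ ω, BddAbove (range fun n => |W n ω|) := fun ω =>
    ⟨sup Y ω + K * |f ω|, by rintro _ ⟨n, rfl⟩; exact hWle n ω⟩
  have hind : IndepFun f (fun ω i => W i ω) P := by
    apply hV.indep hf hWV
    intro i
    have e : ∀ ω, f ω * W i ω = f ω * Y i ω - l i * (f ω * f ω) := fun ω => by simp only [hW]; ring
    simp_rw [e]
    have i1 : Integrable (fun ω => f ω * Y i ω) P := (hV.memLp hf).integrable_mul (hV.memLp (hY i))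
    have i2 : Integrable (fun ω => f ω * f ω) P := (hV.memLp hf).integrable_mul (hV.memLp hf)
    rw [integral_sub i1 (i2.const_mul _), integral_const_mul, hv, hl]
    simp only
    field_simp; ring
  refine ⟨sup W, measurable_sup fun n => hV.meas _ (hWV n), ?_, sup_nonneg W, ?_, ?_, ?_⟩
  · exact hind.comp (φ := id) (ψ := fun g : ℕ → ℝ => ⨆ n, |g n|) measurable_id
      (Measurable.iSup fun n => (measurable_pi_apply n).abs)
  · intro ω
    refine ciSup_le fun n => ?_
    have h1 : Y n ω = W n ω + l n * f ω := by simp [hW]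
    have h2 := le_sup hWb n ω
    have h3 := mul_le_mul_of_nonneg_right (hlK n) (abs_nonneg (f ω))
    have h4 := abs_add_le (W n ω) (l n * f ω)
    rw [abs_mul] at h4
    rw [h1]; linarith
  · exact fun ω => ciSup_le fun n => hWle n ω
  · intro n c hc ω hfω hYω
    have h1 : l n ≤ -c := by rw [hl]; simp only; rw [div_le_iff₀ hv0]; exact hc
    have h2 := le_sup hWb n ω
    have h3 := le_abs_self (W n ω)
    have h4 : W n ω = Y n ω - l n * f ω := rfl
    nlinarith

end GX
end

section
open MeasureTheory ProbabilityTheory Set Filter Topology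
open scoped NNReal ENNReal

namespace GX
set_option linter.unusedSectionVars false
set_option linter.unusedVariables false

lemma rat_seq {A B t : ℝ} (hAB : A < B) (ht : t ∈ Icc A B) :
    ∃ x y z : ℕ → ℚ, (∀ n, (x n : ℝ) ∈ Icc A B ∧ (y n : ℝ) ∈ Icc A B ∧ (z n : ℝ) ∈ Icc A B ∧
      (x n : ℝ) < y n ∧ (y n : ℝ) < z n) ∧ Tendsto (fun n => (x n : ℝ)) atTop (𝓝 t) ∧
      Tendsto (fun n => (z n : ℝ)) atTop (𝓝 t) := by
  have h : ∀ n : ℕ, ∃ x y z : ℚ, max (t - 1 / ((n:ℝ) + 1)) A < x ∧ (x:ℝ) < y ∧ (y:ℝ) < z ∧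
      (z:ℝ) < min (t + 1 / ((n:ℝ) + 1)) B := by
    intro n
    have hp : (0:ℝ) < 1 / ((n:ℝ) + 1) := by positivity
    have : max (t - 1 / ((n:ℝ) + 1)) A < min (t + 1 / ((n:ℝ) + 1)) B := by
      apply max_lt <;> apply lt_min <;> linarith [ht.1, ht.2]
    obtain ⟨x, h1, h2⟩ := exists_rat_btwn this
    obtain ⟨y, h3, h4⟩ := exists_rat_btwn h2
    obtain ⟨z, h5, h6⟩ := exists_rat_btwn h4
    exact ⟨x, y, z, h1, h3, h5, h6⟩
  choose x y z h1 h2 h3 h4 using h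
  have hl : Tendsto (fun n : ℕ => 1 / ((n:ℝ) + 1)) atTop (𝓝 0) := tendsto_one_div_add_atTop_nhds_zero_nat
  have hl1 : Tendsto (fun n : ℕ => t - 1 / ((n:ℝ) + 1)) atTop (𝓝 t) := by simpa using hl.const_sub t
  have hl2 : Tendsto (fun n : ℕ => t + 1 / ((n:ℝ) + 1)) atTop (𝓝 t) := by simpa using hl.const_add t
  refine ⟨x, y, z, fun n => ?_, ?_, ?_⟩
  · have a1 := h1 n; have a2 := h2 n; have a3 := h3 n; have a4 := h4 n
    rw [max_lt_iff] at a1; rw [lt_min_iff] at a4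
    refine ⟨⟨?_, ?_⟩, ⟨?_, ?_⟩, ⟨?_, ?_⟩, a2, a3⟩ <;> linarith
  · refine tendsto_of_tendsto_of_tendsto_of_le_of_le hl1 hl2 (fun n => ?_) (fun n => ?_)
    · exact (max_lt_iff.1 (h1 n)).1.le
    · have := (lt_min_iff.1 (h4 n)).1; have := h2 n; have := h3 n; simp only; linarith
  · refine tendsto_of_tendsto_of_tendsto_of_le_of_le hl1 hl2 (fun n => ?_) (fun n => ?_)
    · have := (max_lt_iff.1 (h1 n)).1; have := h2 n; have := h3 n; simp only; linarith
    · exact (lt_min_iff.1 (h4 n)).1.le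

lemma ne_seq {A B t : ℝ} (hAB : A < B) (ht : t ∈ Icc A B) :
    ∃ x : ℕ → ℝ, (∀ n, x n ∈ Icc A B ∧ x n ≠ t) ∧ Tendsto x atTop (𝓝 t) := by
  obtain ⟨x, y, z, h, hx, hz⟩ := rat_seq hAB ht
  refine ⟨fun n => if (x n : ℝ) = t then z n else x n, fun n => ?_, ?_⟩
  · obtain ⟨h1, h2, h3, h4, h5⟩ := h n
    simp only
    split_ifs with hh
    · exact ⟨h3, by rw [← hh]; linarith⟩
    · exact ⟨h1, hh⟩
  · exact Tendsto.if' hz hx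

lemma C2.tendsto_slope {A B : ℝ} {f f1 f2 : ℝ → ℝ} (h : C2 A B f f1 f2) {t : ℝ} (ht : t ∈ Icc A B)
    {x : ℕ → ℝ} (hx : ∀ n, x n ∈ Icc A B ∧ x n ≠ t) (hl : Tendsto x atTop (𝓝 t)) :
    Tendsto (fun n => (f (x n) - f t) / (x n - t)) atTop (𝓝 (f1 t)) := by
  have h1 := hasDerivWithinAt_iff_tendsto_slope.1 (h.d1 t ht)
  have h2 : Tendsto x atTop (𝓝[Icc A B \ {t}] t) :=
    tendsto_nhdsWithin_iff.2 ⟨hl, Eventually.of_forall fun n => ⟨(hx n).1, (hx n).2⟩⟩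
  refine (h1.comp h2).congr fun n => ?_
  simp [slope_def_field]

variable {Ω : Type*} [MeasurableSpace Ω] {P : Measure Ω}
  {A B : ℝ} {X D D2 : ℝ → Ω → ℝ}

def VX (A B : ℝ) (X : ℝ → Ω → ℝ) : Submodule ℝ (Ω → ℝ) := Submodule.span ℝ (X '' Icc A B)

lemma mem_VX {t : ℝ} (ht : t ∈ Icc A B) : X t ∈ VX A B X := Submodule.subset_span ⟨t, ht, rfl⟩

lemma GS_VX (hm : ∀ t ∈ Icc A B, Measurable (X t))
    (hGauss : ∀ (n : ℕ) (c : Fin n → ℝ) (t : Fin n → ℝ),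
      (∀ i, t i ∈ Set.Icc A B) →
      ∃ v : ℝ≥0, Measure.map (fun ω => ∑ i, c i * X (t i) ω) P = gaussianReal 0 v) :
    GS P (VX A B X) := by
  refine ⟨fun f hf => ?_, fun f hf => ?_⟩
  · induction hf using Submodule.span_induction with
    | mem x h => obtain ⟨t, ht, rfl⟩ := h; exact hm t ht
    | zero => exact measurable_const
    | add x y _ _ h1 h2 => exact h1.add h2
    | smul a x _ h => exact h.const_smul a
  · obtain ⟨n, c, g, rfl⟩ := Submodule.mem_span_set'.1 hf
    choose t ht hgt using fun i => (g i).2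
    obtain ⟨v, hv⟩ := hGauss n c t ht
    refine ⟨v, ?_⟩
    rw [← hv]; congr 1; ext ω
    simp [hgt]

/-- A Gaussian process with `C²` paths. -/
structure Proc (P : Measure Ω) (A B : ℝ) (X D D2 : ℝ → Ω → ℝ) : Prop where
  hAB : A < B
  jm : Measurable (Function.uncurry X)
  path : ∀ ω, C2 A B (fun t => X t ω) (fun t => D t ω) (fun t => D2 t ω)
  gs : GS P (VX A B X)

lemma Proc.meas (h : Proc P A B X D D2) (t : ℝ) : Measurable (X t) :=
  h.jm.comp measurable_prodMk_left

lemma Proc.measD (h : Proc P A B X D D2) {t : ℝ} (ht : t ∈ Icc A B) : Measurable (D t) := by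
  obtain ⟨x, hx, hl⟩ := ne_seq h.hAB ht
  refine measurable_of_tendsto_metrizable (f := fun n ω => (X (x n) ω - X t ω) / (x n - t)) (fun n => ?_)
    (tendsto_pi_nhds.2 fun ω => (h.path ω).tendsto_slope ht hx hl)
  have := h.meas (x n); have := h.meas t; fun_prop

lemma Proc.measD2 (h : Proc P A B X D D2) {t : ℝ} (ht : t ∈ Icc A B) : Measurable (D2 t) := by
  obtain ⟨x, y, z, hx, hl, hl'⟩ := rat_seq h.hAB ht
  have : Measurable (fun ω => D2 t ω / 2) := by
    refine measurable_of_tendsto_metrizable (f := fun n ω => dd3 (fun t => X t ω) (x n) (y n) (z n)) (fun n => ?_)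
      (tendsto_pi_nhds.2 fun ω => (h.path ω).tendsto_dd3 ht (fun n => ?_) (fun n => ?_) (fun n => ?_) (fun n => ?_) hl hl')
    · have := h.meas (x n); have := h.meas (y n); have := h.meas (z n)
      unfold dd3; split_ifs <;> fun_prop
    all_goals obtain ⟨h1, h2, h3, h4, h5⟩ := hx n
    all_goals first | exact h1 | exact h3 | exact h4 | exact h5 | exact h1.1 | exact h3.2
  have h2 := this.mul_const 2
  simpa using h2

end GX
end

section
open MeasureTheory ProbabilityTheory Set Filter Topology
open scoped NNReal ENNReal

namespace GX
set_option linter.unusedSectionVars false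
set_option linter.unusedVariables false

variable {Ω : Type*} [MeasurableSpace Ω] {P : Measure Ω}
  {A B : ℝ} {X D D2 : ℝ → Ω → ℝ} {Y : ℕ → Ω → ℝ}

structure Fam (A B : ℝ) (X D D2 : ℝ → Ω → ℝ) (Y : ℕ → Ω → ℝ) : Prop where
  mem : ∀ n, Y n ∈ VX A B X
  bdd : ∀ ω, BddAbove (range fun n => |Y n ω|)
  hX : ∀ t ∈ Icc A B, ∀ ω, |X t ω| ≤ sup Y ω
  hL : ∀ s ∈ Icc A B, ∀ t ∈ Icc A B, ∀ ω, |X s ω - X t ω| ≤ sup Y ω * |s - t|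
  hD : ∀ t ∈ Icc A B, ∀ ω, |D t ω| ≤ sup Y ω
  hD2 : ∀ t ∈ Icc A B, ∀ ω, |D2 t ω| ≤ 2 * sup Y ω
  h3 : ∀ x y z : ℚ, (x:ℝ) ∈ Icc A B → (y:ℝ) ∈ Icc A B → (z:ℝ) ∈ Icc A B →
    ∃ n, Y n = fun ω => dd3 (fun t => X t ω) x y z

lemma dd2_mem {x y : ℝ} (hx : x ∈ Icc A B) (hy : y ∈ Icc A B) :
    (fun ω => dd2 (fun t => X t ω) x y) ∈ VX A B X := by
  have : (fun ω => dd2 (fun t => X t ω) x y) = (y - x)⁻¹ • (X y - X x) := by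
    ext ω; simp [dd2, div_eq_inv_mul]
  rw [this]
  exact (VX A B X).smul_mem _ ((VX A B X).sub_mem (mem_VX hy) (mem_VX hx))

lemma dd3_mem {x y z : ℝ} (hx : x ∈ Icc A B) (hy : y ∈ Icc A B) (hz : z ∈ Icc A B) :
    (fun ω => dd3 (fun t => X t ω) x y z) ∈ VX A B X := by
  by_cases h : x < y ∧ y < z
  · have : (fun ω => dd3 (fun t => X t ω) x y z) = (z - x)⁻¹ • ((fun ω => dd2 (fun t => X t ω) y z) -
        (fun ω => dd2 (fun t => X t ω) x y)) := by
      ext ω; simp [dd2, dd3, h, div_eq_inv_mul]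
    rw [this]
    exact (VX A B X).smul_mem _ ((VX A B X).sub_mem (dd2_mem hy hz) (dd2_mem hx hy))
  · have : (fun ω => dd3 (fun t => X t ω) x y z) = 0 := by
      ext ω; simp [dd3, h]
    rw [this]; exact (VX A B X).zero_mem

abbrev QI (A B : ℝ) := {q : ℚ // (q:ℝ) ∈ Icc A B}

noncomputable def famF (A B : ℝ) (X : ℝ → Ω → ℝ) : (QI A B) ⊕ ((QI A B × QI A B) ⊕ (QI A B × QI A B × QI A B)) → Ω → ℝ
  | Sum.inl q => X (q:ℚ)
  | Sum.inr (Sum.inl p) => fun ω => dd2 (fun t => X t ω) (p.1:ℚ) (p.2:ℚ)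
  | Sum.inr (Sum.inr p) => fun ω => dd3 (fun t => X t ω) (p.1:ℚ) (p.2.1:ℚ) (p.2.2:ℚ)

lemma Proc.exists_fam (h : Proc P A B X D D2) : ∃ Y, Fam A B X D D2 Y := by
  obtain ⟨q0, hq0, hq0'⟩ := exists_rat_btwn h.hAB
  haveI : Nonempty (QI A B) := ⟨⟨q0, hq0.le, hq0'.le⟩⟩
  obtain ⟨e, he⟩ := exists_surjective_nat ((QI A B) ⊕ ((QI A B × QI A B) ⊕ (QI A B × QI A B × QI A B)))
  set Y : ℕ → Ω → ℝ := fun n => famF A B X (e n) with hY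
  have hYs : ∀ i, ∃ n, Y n = famF A B X i := fun i => by
    obtain ⟨n, hn⟩ := he i; exact ⟨n, by simp [hY, hn]⟩
  have hmem : ∀ n, Y n ∈ VX A B X := by
    intro n; simp only [hY]
    rcases e n with q | p | p
    · exact mem_VX q.2
    · exact dd2_mem p.1.2 p.2.2
    · exact dd3_mem p.1.2 p.2.1.2 p.2.2.2
  have hbdd : ∀ ω, BddAbove (range fun n => |Y n ω|) := by
    intro ω
    obtain ⟨K, hK, k1, k2, k3⟩ := (h.path ω).bound
    refine ⟨K, ?_⟩
    rintro _ ⟨n, rfl⟩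
    simp only [hY]
    rcases e n with q | p | p
    · exact k1 _ q.2
    · exact (h.path ω).abs_dd2_le hK.le k2 p.1.2 p.2.2
    · exact (h.path ω).abs_dd3_le hK.le k3 p.1.2 p.2.2.2
  have hle : ∀ i ω, |famF A B X i ω| ≤ sup Y ω := by
    intro i ω
    obtain ⟨n, hn⟩ := hYs i
    rw [← hn]; exact le_sup hbdd n ω
  have hX : ∀ t ∈ Icc A B, ∀ ω, |X t ω| ≤ sup Y ω := by
    intro t ht ω
    obtain ⟨x, y, z, hx, hl, hl'⟩ := rat_seq h.hAB ht
    have hc : Tendsto (fun n => X (x n) ω) atTop (𝓝 (X t ω)) :=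
      (((h.path ω).c t ht).tendsto).comp
        (tendsto_nhdsWithin_iff.2 ⟨hl, Eventually.of_forall fun n => (hx n).1⟩)
    exact le_of_tendsto' hc.abs fun n => hle (Sum.inl ⟨x n, (hx n).1⟩) ω
  have hL : ∀ s ∈ Icc A B, ∀ t ∈ Icc A B, ∀ ω, |X s ω - X t ω| ≤ sup Y ω * |s - t| := by
    intro s hs t ht ω
    obtain ⟨x, _, _, hx, hl, -⟩ := rat_seq h.hAB ht
    obtain ⟨x', _, _, hx', hm, -⟩ := rat_seq h.hAB hs
    have hc : Tendsto (fun n => X (x n) ω) atTop (𝓝 (X t ω)) :=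
      (((h.path ω).c t ht).tendsto).comp
        (tendsto_nhdsWithin_iff.2 ⟨hl, Eventually.of_forall fun n => (hx n).1⟩)
    have hc' : Tendsto (fun n => X (x' n) ω) atTop (𝓝 (X s ω)) :=
      (((h.path ω).c s hs).tendsto).comp
        (tendsto_nhdsWithin_iff.2 ⟨hm, Eventually.of_forall fun n => (hx' n).1⟩)
    refine le_of_tendsto_of_tendsto' (hc'.sub hc).abs ((hm.sub hl).abs.const_mul (sup Y ω)) fun n => ?_
    have := hle (Sum.inr (Sum.inl (⟨x n, (hx n).1⟩, ⟨x' n, (hx' n).1⟩))) ω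
    simp only [famF, dd2, abs_div] at this
    by_cases hne : (x' n : ℝ) = x n
    · simp [hne]
    · rwa [div_le_iff₀ (abs_pos.2 (sub_ne_zero.2 hne))] at this
  refine ⟨Y, hmem, hbdd, hX, hL, ?_, ?_, ?_⟩
  · intro t ht ω
    obtain ⟨x, hx, hl⟩ := ne_seq h.hAB ht
    refine le_of_tendsto' ((h.path ω).tendsto_slope ht hx hl).abs fun n => ?_
    rw [abs_div, div_le_iff₀ (abs_pos.2 (sub_ne_zero.2 (hx n).2))]
    exact hL _ (hx n).1 _ ht ω
  · intro t ht ω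
    obtain ⟨x, y, z, hx, hl, hl'⟩ := rat_seq h.hAB ht
    have := (h.path ω).tendsto_dd3 ht (x := fun n => (x n:ℝ)) (y := fun n => (y n:ℝ)) (z := fun n => (z n:ℝ))
      (fun n => (hx n).1) (fun n => (hx n).2.2.1) (fun n => (hx n).2.2.2.1)
      (fun n => (hx n).2.2.2.2) hl hl'
    have h4 := le_of_tendsto' this.abs fun n =>
      hle (Sum.inr (Sum.inr (⟨x n, (hx n).1⟩, ⟨y n, (hx n).2.1⟩, ⟨z n, (hx n).2.2.1⟩))) ω
    simp only [abs_div, abs_two] at h4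
    linarith
  · intro x y z hx hy hz
    exact hYs (Sum.inr (Sum.inr (⟨x, hx⟩, ⟨y, hy⟩, ⟨z, hz⟩)))

end GX
end

section
open MeasureTheory ProbabilityTheory Set Filter Topology
open scoped NNReal ENNReal

namespace GX
set_option linter.unusedSectionVars false
set_option linter.unusedVariables false

variable {Ω : Type*} [MeasurableSpace Ω] {P : Measure Ω} [IsProbabilityMeasure P]
  {A B : ℝ} {X D D2 : ℝ → Ω → ℝ} {Y : ℕ → Ω → ℝ}

lemma Proc.measH (h : Proc P A B X D D2) (hF : Fam A B X D D2 Y) : Measurable (sup Y) :=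
  measurable_sup fun n => h.gs.meas _ (hF.mem n)

lemma Proc.intH2 (h : Proc P A B X D D2) (hF : Fam A B X D D2 Y) :
    Integrable (fun ω => sup Y ω ^ 2) P := by
  obtain ⟨c, hc, hi⟩ := h.gs.fernique hF.mem hF.bdd
  have hm := h.measH hF
  have h1 : Integrable (fun ω => Real.exp (c * sup Y ω ^ 2)) P := by
    refine ⟨by fun_prop, ?_⟩
    rw [hasFiniteIntegral_iff_ofReal (ae_of_all _ fun ω => (Real.exp_pos _).le)]
    exact hi
  refine (h1.const_mul c⁻¹).mono' (by fun_prop) (ae_of_all _ fun ω => ?_)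
  rw [Real.norm_eq_abs, abs_of_nonneg (sq_nonneg _), ← div_eq_inv_mul, le_div_iff₀ hc]
  linarith [Real.add_one_le_exp (c * sup Y ω ^ 2)]

lemma Proc.dct (h : Proc P A B X D D2) (hF : Fam A B X D D2 Y) {F : ℕ → Ω → ℝ} {G : Ω → ℝ} {k : ℝ}
    (hm : ∀ n, Measurable (F n)) (hb : ∀ n ω, |F n ω| ≤ k * sup Y ω ^ 2)
    (hl : ∀ ω, Tendsto (fun n => F n ω) atTop (𝓝 (G ω))) :
    Tendsto (fun n => ∫ ω, F n ω ∂P) atTop (𝓝 (∫ ω, G ω ∂P)) :=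
  tendsto_integral_of_dominated_convergence (fun ω => k * sup Y ω ^ 2)
    (fun n => (hm n).aestronglyMeasurable) ((h.intH2 hF).const_mul k)
    (fun n => ae_of_all _ fun ω => hb n ω) (ae_of_all _ hl)

lemma Proc.intb (h : Proc P A B X D D2) (hF : Fam A B X D D2 Y) {F : Ω → ℝ} {k : ℝ}
    (hm : Measurable F) (hb : ∀ ω, |F ω| ≤ k * sup Y ω ^ 2) : Integrable F P :=
  ((h.intH2 hF).const_mul k).mono' hm.aestronglyMeasurable (ae_of_all _ fun ω => hb ω)

lemma abs_mul_le_sq {a b H ka kb : ℝ} (ha : |a| ≤ ka * H) (hb : |b| ≤ kb * H) :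
    |a * b| ≤ (ka * kb) * H ^ 2 := by
  rw [abs_mul]
  have := mul_le_mul ha hb (abs_nonneg _) ((abs_nonneg _).trans ha)
  linarith

lemma Proc.intXX (h : Proc P A B X D D2) (hF : Fam A B X D D2 Y) {s t : ℝ} (hs : s ∈ Icc A B) (ht : t ∈ Icc A B) :
    Integrable (fun ω => X s ω * X t ω) P :=
  h.intb hF (k := 1 * 1) ((h.meas s).mul (h.meas t)) fun ω =>
    abs_mul_le_sq (by simpa using hF.hX s hs ω) (by simpa using hF.hX t ht ω)

lemma Proc.orth (h : Proc P A B X D D2) (hF : Fam A B X D D2 Y) {t₀ : ℝ} (ht₀ : t₀ ∈ Icc A B)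
    (hder : HasDerivWithinAt (fun t => ∫ ω, X t ω * X t ω ∂P) 0 (Icc A B) t₀) :
    ∫ ω, X t₀ ω * D t₀ ω ∂P = 0 := by
  obtain ⟨x, hx, hl⟩ := ne_seq h.hAB ht₀
  have h1 := hasDerivWithinAt_iff_tendsto_slope.1 hder
  have h2 : Tendsto x atTop (𝓝[Icc A B \ {t₀}] t₀) :=
    tendsto_nhdsWithin_iff.2 ⟨hl, Eventually.of_forall fun n => ⟨(hx n).1, (hx n).2⟩⟩
  have h3 := h1.comp h2
  have h4 := h.dct hF (F := fun n ω => (X (x n) ω + X t₀ ω) * ((X (x n) ω - X t₀ ω) / (x n - t₀)))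
    (G := fun ω => (X t₀ ω + X t₀ ω) * D t₀ ω) (k := 2 * 1) (fun n => by
      have := h.meas (x n); have := h.meas t₀; fun_prop)
    (fun n ω => by
      apply abs_mul_le_sq
      · have := abs_add_le (X (x n) ω) (X t₀ ω)
        have := hF.hX _ (hx n).1 ω; have := hF.hX _ ht₀ ω; linarith
      · rw [abs_div, one_mul, div_le_iff₀ (abs_pos.2 (sub_ne_zero.2 (hx n).2))]
        exact hF.hL _ (hx n).1 _ ht₀ ω)
    (fun ω => by
      have hc : Tendsto (fun n => X (x n) ω) atTop (𝓝 (X t₀ ω)) :=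
        (((h.path ω).c t₀ ht₀).tendsto).comp
        (tendsto_nhdsWithin_iff.2 ⟨hl, Eventually.of_forall fun n => (hx n).1⟩)
      exact (hc.add_const _).mul ((h.path ω).tendsto_slope ht₀ hx hl))
  have h5 := tendsto_nhds_unique h3 (h4.congr fun n => by
    simp only [Function.comp, slope_def_field]
    rw [← integral_sub (h.intXX hF (hx n).1 (hx n).1) (h.intXX hF ht₀ ht₀), ← integral_div]
    congr 1; ext ω; ring)
  have e : ∀ ω, (X t₀ ω + X t₀ ω) * D t₀ ω = 2 * (X t₀ ω * D t₀ ω) := fun ω => by ring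
  simp_rw [e] at h5
  rw [integral_const_mul] at h5
  linarith

lemma Proc.neg (h : Proc P A B X D D2) (hF : Fam A B X D D2 Y) {t₀ : ℝ} (ht₀ : t₀ ∈ Ioc A B)
    (hmax : ∀ t ∈ Icc A B, ∫ ω, X t ω * X t ω ∂P ≤ ∫ ω, X t₀ ω * X t₀ ω ∂P)
    (hder : HasDerivWithinAt (fun t => ∫ ω, X t ω * X t ω ∂P) 0 (Icc A B) t₀)
    (hnd : P {ω | D t₀ ω = 0} < 1) : ∫ ω, X t₀ ω * D2 t₀ ω ∂P < 0 := by
  have ht : t₀ ∈ Icc A B := ⟨ht₀.1.le, ht₀.2⟩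
  have horth := h.orth hF ht hder
  have mD := h.measD ht
  have mD2 := h.measD2 ht
  have mX := h.meas t₀
  have hpos : 0 < ∫ ω, D t₀ ω * D t₀ ω ∂P := by
    refine lt_of_le_of_ne (integral_nonneg fun ω => mul_self_nonneg _) fun h0 => ?_
    have hi : Integrable (fun ω => D t₀ ω * D t₀ ω) P :=
      h.intb hF (k := 1*1) (by fun_prop) fun ω => abs_mul_le_sq (by simpa using hF.hD _ ht ω)
        (by simpa using hF.hD _ ht ω)
    have := (integral_eq_zero_iff_of_nonneg (fun ω => mul_self_nonneg _) hi).1 h0.symm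
    have h1 : ∀ᵐ ω ∂P, ω ∈ {ω | D t₀ ω = 0} := by
      filter_upwards [this] with ω hω
      simpa using hω
    rw [(prob_compl_eq_zero_iff (measurableSet_eq_fun mD measurable_const)).1 h1] at hnd
    exact lt_irrefl _ hnd
  set x : ℕ → ℝ := fun n => t₀ - (t₀ - A) / ((n:ℝ) + 1) with hx
  have hA : 0 < t₀ - A := by linarith [ht₀.1]
  have hxlt : ∀ n, x n < t₀ := fun n => by
    have : 0 < (t₀ - A) / ((n:ℝ) + 1) := by positivity
    simp only [hx]; linarith
  have hxI : ∀ n, x n ∈ Icc A B := fun n => by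
    refine ⟨?_, (hxlt n).le.trans ht₀.2⟩
    have : (t₀ - A) / ((n:ℝ) + 1) ≤ t₀ - A := div_le_self hA.le (by linarith [(Nat.cast_nonneg n : (0:ℝ) ≤ n)])
    simp only [hx]; linarith
  have hxl : Tendsto x atTop (𝓝 t₀) := by
    have : Tendsto (fun n : ℕ => (t₀ - A) * (1 / ((n:ℝ) + 1))) atTop (𝓝 ((t₀ - A) * 0)) :=
      tendsto_one_div_add_atTop_nhds_zero_nat.const_mul _
    have := this.const_sub t₀
    simpa [hx, div_eq_mul_inv] using this
  set Sl : ℕ → Ω → ℝ := fun n ω => (X (x n) ω - X t₀ ω) / (x n - t₀) with hSl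
  set Q : ℕ → Ω → ℝ := fun n ω => (X (x n) ω - X t₀ ω - D t₀ ω * (x n - t₀)) / (x n - t₀)^2 with hQ
  have mSl : ∀ n, Measurable (Sl n) := fun n => by have := h.meas (x n); fun_prop
  have mQ : ∀ n, Measurable (Q n) := fun n => by have := h.meas (x n); fun_prop
  have bSl : ∀ n ω, |Sl n ω| ≤ 1 * sup Y ω := fun n ω => by
    rw [hSl]; simp only
    rw [abs_div, one_mul, div_le_iff₀ (abs_pos.2 (sub_ne_zero.2 (hxlt n).ne))]
    exact hF.hL _ (hxI n) _ ht ω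
  have bQ : ∀ n ω, |Q n ω| ≤ 1 * sup Y ω := fun n ω => by
    have hb : ∀ w ∈ Icc (x n) t₀, |D2 w ω| ≤ 2 * sup Y ω := fun w hw =>
      hF.hD2 w ⟨(hxI n).1.trans hw.1, hw.2.trans ht.2⟩ ω
    have l := (h.path ω).le_taylor (hxI n).1 (hxlt n) ht.2 (m := -(2 * sup Y ω))
      (fun w hw => (abs_le.1 (hb w hw)).1)
    have u := (h.path ω).taylor_le (hxI n).1 (hxlt n) ht.2 (m := (2 * sup Y ω))
      (fun w hw => (abs_le.1 (hb w hw)).2)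
    rw [abs_le]; simp only [hQ]; constructor <;> linarith
  have l1 := h.dct hF (F := fun n ω => Sl n ω * Sl n ω) (G := fun ω => D t₀ ω * D t₀ ω) (k := 1*1)
    (fun n => (mSl n).mul (mSl n)) (fun n ω => abs_mul_le_sq (bSl n ω) (bSl n ω))
    (fun ω => by
      have := (h.path ω).tendsto_slope ht (x := x) (fun n => ⟨hxI n, (hxlt n).ne⟩) hxl
      exact this.mul this)
  have l2 := h.dct hF (F := fun n ω => X t₀ ω * Q n ω) (G := fun ω => X t₀ ω * (D2 t₀ ω / 2)) (k := 1*1)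
    (fun n => mX.mul (mQ n)) (fun n ω => abs_mul_le_sq (by simpa using hF.hX _ ht ω) (bQ n ω))
    (fun ω => ((h.path ω).tendsto_taylor ht hxI hxlt hxl).const_mul _)
  have l3 := l1.add (l2.const_mul 2)
  have h6 := le_of_tendsto' l3 (b := 0) fun n => by
    have hd : 0 < (x n - t₀)^2 := by have := sub_ne_zero.2 (hxlt n).ne; positivity
    have i1 : Integrable (fun ω => Sl n ω * Sl n ω) P :=
      h.intb hF (k := 1*1) ((mSl n).mul (mSl n)) (fun ω => abs_mul_le_sq (bSl n ω) (bSl n ω))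
    have i2 : Integrable (fun ω => X t₀ ω * Q n ω) P :=
      h.intb hF (k := 1*1) (mX.mul (mQ n)) (fun ω => abs_mul_le_sq (by simpa using hF.hX _ ht ω) (bQ n ω))
    have i3 : Integrable (fun ω => X t₀ ω * D t₀ ω) P :=
      h.intb hF (k := 1*1) (mX.mul mD) (fun ω => abs_mul_le_sq (by simpa using hF.hX _ ht ω) (by simpa using hF.hD _ ht ω))
    have i4 : Integrable (fun ω => (x n - t₀)^2 * (Sl n ω * Sl n ω + 2 * (X t₀ ω * Q n ω))) P :=
      (i1.add (i2.const_mul 2)).const_mul _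
    have e1 : ∫ ω, X (x n) ω * X (x n) ω ∂P - ∫ ω, X t₀ ω * X t₀ ω ∂P =
        (x n - t₀)^2 * (∫ ω, Sl n ω * Sl n ω ∂P + 2 * ∫ ω, X t₀ ω * Q n ω ∂P)
        + 2 * (x n - t₀) * ∫ ω, X t₀ ω * D t₀ ω ∂P := by
      rw [← integral_const_mul 2, ← integral_add i1 (i2.const_mul 2), ← integral_const_mul, ← integral_const_mul,
        ← integral_sub (h.intXX hF (hxI n) (hxI n)) (h.intXX hF ht ht),
        ← integral_add i4 (i3.const_mul _)]
      congr 1; ext ω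
      have : x n - t₀ ≠ 0 := sub_ne_zero.2 (hxlt n).ne
      simp only [hSl, hQ]
      field_simp
      ring
    rw [horth] at e1
    have := hmax _ (hxI n)
    by_contra hc
    push Not at hc
    have := mul_pos hd hc
    linarith
  have e : ∀ ω, X t₀ ω * (D2 t₀ ω / 2) = (X t₀ ω * D2 t₀ ω) / 2 := fun ω => by ring
  simp_rw [e] at h6
  rw [integral_div] at h6
  linarith

lemma Proc.cov (h : Proc P A B X D D2) (hF : Fam A B X D D2 Y) {t₀ : ℝ} (ht : t₀ ∈ Icc A B)
    (hneg : ∫ ω, X t₀ ω * D2 t₀ ω ∂P < 0) :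
    ∃ ρ > 0, ∃ c > 0, ∀ x y z : ℚ, ∀ t : ℝ, (x:ℝ) ∈ Icc A B → (z:ℝ) ∈ Icc A B → t ∈ Icc A B →
      (x:ℝ) < y → (y:ℝ) < z → |x - t₀| ≤ ρ → |z - t₀| ≤ ρ → |t - t₀| ≤ ρ →
      ∫ ω, X t ω * dd3 (fun s => X s ω) x y z ∂P ≤ - c := by
  by_contra hcon
  push Not at hcon
  have hh := fun n : ℕ => hcon (1 / ((n:ℝ) + 1)) (by positivity)
    (-(∫ ω, X t₀ ω * D2 t₀ ω ∂P) / 4) (by linarith)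
  choose x y z t hx hz htI hxy hyz hxρ hzρ htρ hlt using hh
  have l0 : Tendsto (fun n : ℕ => 1 / ((n:ℝ) + 1)) atTop (𝓝 0) := tendsto_one_div_add_atTop_nhds_zero_nat
  have lim : ∀ w : ℕ → ℝ, (∀ n : ℕ, |w n - t₀| ≤ 1 / ((n:ℝ) + 1)) → Tendsto w atTop (𝓝 t₀) := by
    intro w hw
    rw [tendsto_iff_norm_sub_tendsto_zero]
    exact squeeze_zero (fun n => norm_nonneg _) hw l0
  have := h.dct hF (F := fun n ω => X (t n) ω * dd3 (fun s => X s ω) (x n) (y n) (z n))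
    (G := fun ω => X t₀ ω * (D2 t₀ ω / 2)) (k := 1 * 2) (fun n => by
      have := h.meas (x n); have := h.meas (y n); have := h.meas (z n); have := h.meas (t n)
      unfold dd3; split_ifs <;> fun_prop)
    (fun n ω => abs_mul_le_sq (by simpa using hF.hX _ (htI n) ω)
      ((h.path ω).abs_dd3_le (by linarith [sup_nonneg Y ω]) (fun w hw => hF.hD2 w hw ω) (hx n) (hz n)))
    (fun ω => by
      have hc : Tendsto (fun n => X (t n) ω) atTop (𝓝 (X t₀ ω)) :=
        (((h.path ω).c t₀ ht).tendsto).comp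
        (tendsto_nhdsWithin_iff.2 ⟨lim _ htρ, Eventually.of_forall htI⟩)
      exact hc.mul ((h.path ω).tendsto_dd3 ht hx hz hxy hyz (lim _ hxρ) (lim _ hzρ)))
  have h2 := ge_of_tendsto' this fun n => (hlt n).le
  have e : ∀ ω, X t₀ ω * (D2 t₀ ω / 2) = (X t₀ ω * D2 t₀ ω) / 2 := fun ω => by ring
  simp_rw [e] at h2
  rw [integral_div] at h2
  linarith

end GX
end

section
open MeasureTheory ProbabilityTheory Set Filter Topology
open scoped NNReal ENNReal

namespace GX
set_option linter.unusedSectionVars false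
set_option linter.unusedVariables false

variable {Ω : Type*} [MeasurableSpace Ω] {P : Measure Ω}
  {A B : ℝ} {X D D2 : ℝ → Ω → ℝ} {Y : ℕ → Ω → ℝ}

lemma meas_exists {K : Set ℝ} (hK : IsCompact K) {φ : ℝ → Ω → ℝ} (hc : ∀ ω, ContinuousOn (fun t => φ t ω) K)
    (hm : ∀ t ∈ K, Measurable (φ t)) : MeasurableSet {ω | ∃ t ∈ K, φ t ω ≤ 0} := by
  obtain ⟨S, hS, hSd⟩ := TopologicalSpace.exists_countable_dense K
  have : {ω | ∃ t ∈ K, φ t ω ≤ 0} = ⋂ k : ℕ, ⋃ s ∈ S, {ω | φ (s:K) ω < 1 / ((k:ℝ)+1)} := by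
    ext ω
    simp only [mem_ofPred_eq, mem_iInter, mem_iUnion]
    constructor
    · rintro ⟨t, ht, h0⟩ k
      have ho : IsOpen {s : K | φ s ω < 1 / ((k:ℝ)+1)} :=
        isOpen_lt (continuousOn_iff_continuous_domRestrict.1 (hc ω)) continuous_const
      obtain ⟨s, hs1, hs2⟩ := hSd.exists_mem_open ho ⟨⟨t, ht⟩, lt_of_le_of_lt h0 (by positivity)⟩
      exact ⟨s, hs1, hs2⟩
    · intro h
      have hne : K.Nonempty := by obtain ⟨s, -, -⟩ := h 0; exact ⟨s, s.2⟩
      obtain ⟨t, ht, hmin⟩ := hK.exists_isMinOn hne (hc ω)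
      refine ⟨t, ht, ?_⟩
      have l0 : Tendsto (fun n : ℕ => 1 / ((n:ℝ) + 1)) atTop (𝓝 0) := tendsto_one_div_add_atTop_nhds_zero_nat
      refine ge_of_tendsto' l0 fun k => ?_
      obtain ⟨s, -, h2⟩ := h k
      exact (hmin s.2).trans h2.le
  rw [this]
  exact MeasurableSet.iInter fun k => MeasurableSet.biUnion hS fun s _ =>
    measurableSet_lt (hm s s.2) measurable_const

/-- The set of up-crossings. -/
def ups (X D : ℝ → Ω → ℝ) (M : Set ℝ) (u : ℝ) (ω : Ω) : Set ℝ := {t ∈ M | X t ω = u ∧ 0 < D t ω}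

lemma Proc.meas_ups (h : Proc P A B X D D2) {K : Set ℝ} (hK : IsCompact K) (hKI : K ⊆ Icc A B) (u : ℝ) :
    MeasurableSet {ω | ∃ t ∈ K, X t ω = u ∧ 0 < D t ω} := by
  have : {ω | ∃ t ∈ K, X t ω = u ∧ 0 < D t ω} =
      ⋃ m : ℕ, {ω | ∃ t ∈ K, max (|X t ω - u|) (1 / ((m:ℝ)+1) - D t ω) ≤ 0} := by
    ext ω
    simp only [mem_ofPred_eq, mem_iUnion, max_le_iff, abs_nonpos_iff, sub_nonpos, sub_eq_zero]
    constructor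
    · rintro ⟨t, ht, h1, h2⟩
      obtain ⟨m, hm⟩ := exists_nat_one_div_lt h2
      exact ⟨m, t, ht, h1, hm.le⟩
    · rintro ⟨m, t, ht, h1, h2⟩
      exact ⟨t, ht, h1, lt_of_lt_of_le (by positivity) h2⟩
  rw [this]
  refine MeasurableSet.iUnion fun m => meas_exists hK (fun ω => ?_) fun t ht => ?_
  · have h1 := (h.path ω).c.mono hKI
    have h2 := (h.path ω).c1.mono hKI
    exact ((h1.sub continuousOn_const).abs).sup (continuousOn_const.sub h2)
  · have := h.meas t; have := h.measD (hKI ht); fun_prop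

lemma natCast_le_encard_iff {T : Set ℝ} {n : ℕ} : (n:ℕ∞) ≤ T.encard ↔
    ∃ q : Fin n → ℚ × ℚ, (∀ i j, i ≠ j → Disjoint (Icc ((q i).1:ℝ) (q i).2) (Icc ((q j).1:ℝ) (q j).2)) ∧
      ∀ i, ∃ t ∈ T, t ∈ Icc ((q i).1:ℝ) (q i).2 := by
  constructor
  · intro h
    obtain ⟨F, hFT, hF⟩ := Set.exists_subset_encard_eq h
    have hfin : F.Finite := Set.finite_of_encard_eq_coe hF
    obtain ⟨U, hU, hd⟩ := hfin.t2_separation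
    have hq : ∀ t : ℝ, ∃ q : ℚ × ℚ, t ∈ Icc (q.1:ℝ) q.2 ∧ Icc (q.1:ℝ) q.2 ⊆ U t := by
      intro t
      obtain ⟨l, r, hlr, hs⟩ := mem_nhds_iff_exists_Ioo_subset.1 ((hU t).2.mem_nhds (hU t).1)
      obtain ⟨p, hp1, hp2⟩ := exists_rat_btwn hlr.1
      obtain ⟨q, hq1, hq2⟩ := exists_rat_btwn hlr.2
      exact ⟨(p, q), ⟨hp2.le, hq1.le⟩, fun x hx => hs ⟨hp1.trans_le hx.1, hx.2.trans_lt hq2⟩⟩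
    choose q hq1 hq2 using hq
    have hcard : Nat.card F = n := by
      have : F.ncard = n := by rw [Set.ncard, hF]; simp
      simpa using this
    have : Finite F := hfin
    let e := Finite.equivFinOfCardEq hcard
    refine ⟨fun i => q (e.symm i), fun i j hij => ?_, fun i => ⟨e.symm i, hFT (e.symm i).2, hq1 _⟩⟩
    refine (hd (e.symm i).2 (e.symm j).2 fun h => hij ?_).mono (hq2 _) (hq2 _)
    exact e.symm.injective (Subtype.ext h)
  · rintro ⟨q, hd, ht⟩
    choose t ht1 ht2 using ht
    have hinj : Function.Injective t := fun i j hij => by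
      by_contra hne
      exact Set.disjoint_left.1 (hd i j hne) (ht2 i) (hij ▸ ht2 j)
    calc (n:ℕ∞) = (range t).encard := by
          rw [← image_univ, hinj.encard_image, encard_univ]; simp
      _ ≤ T.encard := encard_le_encard (by rintro _ ⟨i, rfl⟩; exact ht1 i)

lemma Proc.meas_le_encard (h : Proc P A B X D D2) {M : Set ℝ} (hM : IsCompact M) (hMI : M ⊆ Icc A B) (u : ℝ) (n : ℕ) :
    MeasurableSet {ω | (n:ℕ∞) ≤ (ups X D M u ω).encard} := by
  simp_rw [natCast_le_encard_iff]
  have : {ω | ∃ q : Fin n → ℚ × ℚ, (∀ i j, i ≠ j → Disjoint (Icc ((q i).1:ℝ) (q i).2) (Icc ((q j).1:ℝ) (q j).2)) ∧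
      ∀ i, ∃ t ∈ ups X D M u ω, t ∈ Icc ((q i).1:ℝ) (q i).2} =
      ⋃ q : Fin n → ℚ × ℚ, ({ω | ∀ i j, i ≠ j → Disjoint (Icc ((q i).1:ℝ) (q i).2) (Icc ((q j).1:ℝ) (q j).2)} ∩
        ⋂ i, {ω | ∃ t ∈ M ∩ Icc ((q i).1:ℝ) (q i).2, X t ω = u ∧ 0 < D t ω}) := by
    ext ω
    simp only [mem_ofPred_eq, mem_iUnion, mem_inter_iff, mem_iInter, ups]
    refine exists_congr fun q => and_congr_right fun _ => forall_congr' fun i => exists_congr fun t => ?_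
    tauto
  rw [this]
  refine MeasurableSet.iUnion fun q => (MeasurableSet.const _).inter (MeasurableSet.iInter fun i => ?_)
  exact h.meas_ups (hM.inter_right isClosed_Icc) (inter_subset_left.trans hMI) u

lemma ENat_toENNReal_eq_iSup (x : ℕ∞) : (x : ℝ≥0∞) = ⨆ n : ℕ, if (n:ℕ∞) ≤ x then (n:ℝ≥0∞) else 0 := by
  apply le_antisymm
  · induction x using ENat.recTopCoe with
    | top => simp [ENNReal.iSup_natCast]
    | coe m => exact le_iSup_of_le m (by simp)
  · refine iSup_le fun n => ?_
    split_ifs with hn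
    · exact_mod_cast hn
    · simp

/-- Number of up-crossings. -/
noncomputable def NN (X D : ℝ → Ω → ℝ) (M : Set ℝ) (u : ℝ) (ω : Ω) : ℝ≥0∞ := ((ups X D M u ω).encard : ℝ≥0∞)

lemma Proc.meas_NN (h : Proc P A B X D D2) {M : Set ℝ} (hM : IsCompact M) (hMI : M ⊆ Icc A B) (u : ℝ) :
    Measurable (NN X D M u) := by
  have : NN X D M u = fun ω => ⨆ n : ℕ, if (n:ℕ∞) ≤ (ups X D M u ω).encard then (n:ℝ≥0∞) else 0 := by
    ext ω; exact ENat_toENNReal_eq_iSup _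
  rw [this]
  exact Measurable.iSup fun n => Measurable.ite (h.meas_le_encard hM hMI u n) measurable_const measurable_const

lemma NN_toReal (M : Set ℝ) (u : ℝ) (ω : Ω) : (NN X D M u ω).toReal = ((ups X D M u ω).ncard : ℝ) := by
  unfold NN Set.ncard
  induction (ups X D M u ω).encard using ENat.recTopCoe with
  | top => simp
  | coe m => simp

lemma Proc.integral_ncard (h : Proc P A B X D D2) {M : Set ℝ} (hM : IsCompact M) (hMI : M ⊆ Icc A B) (u : ℝ)
    (hfin : ∫⁻ ω, NN X D M u ω ∂P ≠ ⊤) :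
    ∫ ω, ((ups X D M u ω).ncard : ℝ) ∂P = (∫⁻ ω, NN X D M u ω ∂P).toReal := by
  have hm := h.meas_NN hM hMI u
  rw [← integral_toReal hm.aemeasurable (ae_lt_top hm hfin)]
  simp_rw [NN_toReal]

lemma Proc.meas_hit (h : Proc P A B X D D2) {K : Set ℝ} (hK : IsCompact K) (hKI : K ⊆ Icc A B) (u : ℝ) :
    MeasurableSet {ω | ∃ t ∈ K, u ≤ X t ω} := by
  have := meas_exists hK (φ := fun t ω => u - X t ω) (fun ω => continuousOn_const.sub ((h.path ω).c.mono hKI))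
    (fun t _ => by have := h.meas t; fun_prop)
  simpa only [sub_nonpos] using this

lemma Proc.meas_hit_neg (h : Proc P A B X D D2) {K : Set ℝ} (hK : IsCompact K) (hKI : K ⊆ Icc A B) (u : ℝ) :
    MeasurableSet {ω | ∃ t ∈ K, u ≤ - X t ω} := by
  have := meas_exists hK (φ := fun t ω => u - - X t ω) (fun ω => continuousOn_const.sub ((h.path ω).c.mono hKI).neg)
    (fun t _ => by have := h.meas t; fun_prop)
  simpa only [sub_nonpos] using this

lemma Proc.meas_hit_abs (h : Proc P A B X D D2) {K : Set ℝ} (hK : IsCompact K) (hKI : K ⊆ Icc A B) (u : ℝ) :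
    MeasurableSet {ω | ∃ t ∈ K, u ≤ |X t ω|} := by
  have := meas_exists hK (φ := fun t ω => u - |X t ω|) (fun ω => continuousOn_const.sub ((h.path ω).c.mono hKI).abs)
    (fun t _ => by have := h.meas t; fun_prop)
  simpa only [sub_nonpos] using this

end GX
end

section
open MeasureTheory ProbabilityTheory Set Filter Topology
open scoped NNReal ENNReal

namespace GX
set_option linter.unusedSectionVars false
set_option linter.unusedVariables false

variable {Ω : Type*} [MeasurableSpace Ω] {P : Measure Ω} [IsProbabilityMeasure P]
  {A B : ℝ} {X D D2 : ℝ → Ω → ℝ} {Y : ℕ → Ω → ℝ}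

lemma gauss_neg {ι : Type*} [Fintype ι] {μ : Measure (ι → ℝ)} [IsGaussian μ]
    (hL : ∀ L : StrongDual ℝ (ι → ℝ), ∫ x, L x ∂μ = 0) : μ.map (fun x => -x) = μ := by
  have : IsProbabilityMeasure (μ.map (fun x : ι → ℝ => -x)) :=
    Measure.isProbabilityMeasure_map (by fun_prop)
  apply Measure.ext_of_charFunDual
  ext L
  have h1 : charFunDual (μ.map (fun x => -x)) L = charFunDual μ (-L) := by
    simp only [charFunDual_apply]
    rw [integral_map (by fun_prop) (by fun_prop)]
    simp
  rw [h1, IsGaussian.charFunDual_eq, IsGaussian.charFunDual_eq]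
  rw [integral_complex_ofReal, integral_complex_ofReal, hL, hL]
  congr 2
  have : Var[(-L : StrongDual ℝ (ι → ℝ)); μ] = Var[L; μ] := by
    exact variance_neg (X := fun x => L x)
  rw [this]

lemma GS.pi_neg {V : Submodule ℝ (Ω → ℝ)} (hV : GS P V) {ι : Type*} {Y : ι → Ω → ℝ} (hY : ∀ i, Y i ∈ V) :
    P.map (fun ω i => Y i ω) = P.map (fun ω i => - Y i ω) := by
  have hm : Measurable (fun ω i => Y i ω) := measurable_pi_iff.2 fun i => hV.meas _ (hY i)
  have hm' : Measurable (fun ω i => - Y i ω) := measurable_pi_iff.2 fun i => (hV.meas _ (hY i)).neg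
  rw [map_eq_iff_forall_finset_map_restrict_eq hm.aemeasurable hm'.aemeasurable]
  intro I
  obtain ⟨h1, h2⟩ := hV.pi_gaussian (Y := fun i : I => Y i) fun i => hY i
  have h3 := gauss_neg h2
  rw [Measure.map_map (by fun_prop) (measurable_pi_iff.2 fun i : I => hV.meas _ (hY i))] at h3
  exact h3.symm

lemma Proc.symm (h : Proc P A B X D D2) {K : Set ℝ} (hK : IsCompact K) (hKI : K ⊆ Icc A B) (u : ℝ) :
    P {ω | ∃ t ∈ K, u ≤ - X t ω} = P {ω | ∃ t ∈ K, u ≤ X t ω} := by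
  obtain ⟨S, hS, hSd⟩ := TopologicalSpace.exists_countable_dense K
  let W : Set (K → ℝ) := ⋂ k : ℕ, ⋃ s ∈ S, {x | u - x s < 1 / ((k:ℝ)+1)}
  have hW : MeasurableSet W := MeasurableSet.iInter fun k => MeasurableSet.biUnion hS fun s _ =>
    measurableSet_lt (measurable_const.sub (measurable_pi_apply s)) measurable_const
  have key : ∀ x : ℝ → ℝ, ContinuousOn x K → ((∃ t ∈ K, u ≤ x t) ↔ (fun s : K => x s) ∈ W) := by
    intro x hx
    simp only [W, mem_ofPred_eq, mem_iInter, mem_iUnion]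
    constructor
    · rintro ⟨t, ht, h0⟩ k
      have ho : IsOpen {s : K | u - x s < 1 / ((k:ℝ)+1)} :=
        isOpen_lt (continuous_const.sub (continuousOn_iff_continuous_domRestrict.1 hx)) continuous_const
      obtain ⟨s, hs1, hs2⟩ := hSd.exists_mem_open ho ⟨⟨t, ht⟩, lt_of_le_of_lt (sub_nonpos.2 h0) (by positivity)⟩
      exact ⟨s, hs1, hs2⟩
    · intro h
      have hne : K.Nonempty := by obtain ⟨s, -, -⟩ := h 0; exact ⟨s, s.2⟩
      obtain ⟨t, ht, hmin⟩ := hK.exists_isMaxOn hne hx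
      refine ⟨t, ht, sub_nonpos.1 ?_⟩
      have l0 : Tendsto (fun n : ℕ => 1 / ((n:ℝ) + 1)) atTop (𝓝 0) := tendsto_one_div_add_atTop_nhds_zero_nat
      refine ge_of_tendsto' l0 fun k => ?_
      obtain ⟨s, -, h2⟩ := h k
      have := hmin s.2
      simp only [mem_ofPred_eq] at this
      linarith
  have hmem : ∀ s : K, X s ∈ VX A B X := fun s => mem_VX (hKI s.2)
  have e := h.gs.pi_neg (Y := fun s : K => X s) hmem
  have e2 := congrArg (fun μ => μ W) e
  beta_reduce at e2
  rw [Measure.map_apply (measurable_pi_iff.2 fun i : K => h.meas i) hW,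
    Measure.map_apply (show Measurable (fun ω (i : K) => - X i ω) from measurable_pi_iff.2 fun i : K => (h.meas i).neg) hW] at e2
  have a1 : {ω | ∃ t ∈ K, u ≤ X t ω} = (fun ω (i : K) => X i ω) ⁻¹' W := by
    ext ω; exact key (fun t => X t ω) ((h.path ω).c.mono hKI)
  have a2 : {ω | ∃ t ∈ K, u ≤ - X t ω} = (fun ω (i : K) => - X i ω) ⁻¹' W := by
    ext ω; exact key (fun t => - X t ω) ((h.path ω).c.mono hKI).neg
  rw [a1, a2, e2]

end GX
end

section
open MeasureTheory ProbabilityTheory Set Filter Topology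
open scoped NNReal ENNReal

namespace GX
set_option linter.unusedSectionVars false
set_option linter.unusedVariables false

variable {Ω : Type*} [MeasurableSpace Ω] {P : Measure Ω} [IsProbabilityMeasure P]
  {A B : ℝ} {X D D2 : ℝ → Ω → ℝ} {Y : ℕ → Ω → ℝ}

/-- occupation measure -/
noncomputable def occ (X : ℝ → Ω → ℝ) (a b : ℝ) (U : Set ℝ) (u ε : ℝ) (ω : Ω) : ℝ≥0∞ :=
  volume {t | t ∈ Icc a b ∧ t ∈ U ∧ |X t ω - u| < ε}

lemma occ_measSet (h : Proc P A B X D D2) {a b : ℝ} {U : Set ℝ} (hU : IsOpen U) (u ε : ℝ) :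
    MeasurableSet {q : Ω × ℝ | q.2 ∈ Icc a b ∧ q.2 ∈ U ∧ |X q.2 q.1 - u| < ε} := by
  have hX : Measurable (fun q : Ω × ℝ => X q.2 q.1) := h.jm.comp measurable_swap
  exact (measurable_snd measurableSet_Icc).inter ((measurable_snd hU.measurableSet).inter
    (measurableSet_lt (hX.sub_const u).abs measurable_const))

lemma Proc.meas_occ (h : Proc P A B X D D2) {a b : ℝ} {U : Set ℝ} (hU : IsOpen U) (u ε : ℝ) :
    Measurable (occ X a b U u ε) :=
  measurable_measure_prodMk_left (occ_measSet h hU u ε)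

lemma Proc.occ_le (h : Proc P A B X D D2) {a b : ℝ} {U : Set ℝ} (hU : IsOpen U) (u ε : ℝ)
    {w : Ω → ℝ≥0∞} (hw : Measurable w) {C : ℝ≥0∞}
    (hC : ∀ t ∈ Icc a b, t ∈ U → ∫⁻ ω, {ω | |X t ω - u| < ε}.indicator w ω ∂P ≤ C) :
    ∫⁻ ω, w ω * occ X a b U u ε ω ∂P ≤ C * ENNReal.ofReal (b - a) := by
  set G := {q : Ω × ℝ | q.2 ∈ Icc a b ∧ q.2 ∈ U ∧ |X q.2 q.1 - u| < ε} with hG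
  have hGm : MeasurableSet G := occ_measSet h hU u ε
  have hGi : ∀ ω t, (ω, t) ∈ G ↔ t ∈ Icc a b ∧ t ∈ U ∧ |X t ω - u| < ε := fun ω t => Iff.rfl
  have e1 : ∀ ω, w ω * occ X a b U u ε ω = ∫⁻ t, G.indicator (fun q => w q.1) (ω, t) := by
    intro ω
    have : (fun t => G.indicator (fun q => w q.1) (ω, t)) =
        {t | t ∈ Icc a b ∧ t ∈ U ∧ |X t ω - u| < ε}.indicator (fun _ => w ω) := by
      ext t; rfl
    rw [this]
    erw [lintegral_indicator_const (show MeasurableSet {t | t ∈ Icc a b ∧ t ∈ U ∧ |X t ω - u| < ε} from measurable_prodMk_left hGm)]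
    rfl
  simp_rw [e1]
  rw [lintegral_lintegral_swap (f := fun ω t => G.indicator (fun q => w q.1) (ω, t))
    ((hw.comp measurable_fst).indicator hGm).aemeasurable]
  calc _ ≤ ∫⁻ t, (Icc a b).indicator (fun _ => C) t := by
        refine lintegral_mono fun t => ?_
        by_cases ht : t ∈ Icc a b ∧ t ∈ U
        · rw [indicator_of_mem ht.1]
          refine le_trans (le_of_eq (lintegral_congr fun ω => ?_)) (hC t ht.1 ht.2)
          simp only [indicator, hGi, mem_ofPred_eq, ht.1, ht.2, true_and]
        · refine le_trans (le_of_eq ?_) zero_le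
          rw [lintegral_eq_zero_iff' (by
            exact (((hw.comp measurable_fst).indicator hGm).comp measurable_prodMk_right).aemeasurable)]
          refine Eventually.of_forall fun ω => ?_
          simp only [indicator, hGi, mem_ofPred_eq, Pi.zero_apply]
          rw [if_neg]; rw [hGi]; tauto
    _ = C * ENNReal.ofReal (b - a) := by
        rw [lintegral_indicator_const measurableSet_Icc, Real.volume_Icc]

lemma encard_le_of_forall {T : Set ℝ} {x : ℝ≥0∞} (hx : ∀ F : Finset ℝ, (F:Set ℝ) ⊆ T → (F.card : ℝ≥0∞) ≤ x) :
    ((T.encard : ℕ∞) : ℝ≥0∞) ≤ x := by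
  rw [ENat_toENNReal_eq_iSup]
  refine iSup_le fun n => ?_
  split_ifs with hn
  · obtain ⟨F, hFT, hF⟩ := Set.exists_subset_encard_eq hn
    have hfin : F.Finite := Set.finite_of_encard_eq_coe hF
    have h1 := hx hfin.toFinset (by simpa using hFT)
    rw [hfin.encard_eq_coe_toFinset_card] at hF
    have : hfin.toFinset.card = n := by exact_mod_cast hF
    rwa [this] at h1
  · exact zero_le

lemma Proc.count (h : Proc P A B X D D2) (hF : Fam A B X D D2 Y) {a b : ℝ} (ha : A ≤ a) (hb : b ≤ B) (hab : a < b)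
    {U : Set ℝ} (hU : IsOpen U) {u ε₁ C : ℝ} (hε₁ : 0 < ε₁) (hC0 : 0 ≤ C) {E : Set Ω} (hE : MeasurableSet E)
    (hC : ∀ t ∈ Icc a b, t ∈ U → ∀ ε, 0 < ε → ε ≤ ε₁ →
      ∫⁻ ω, {ω | |X t ω - u| < ε}.indicator (E.indicator (fun ω => ENNReal.ofReal (sup Y ω + 1))) ω ∂P
        ≤ ENNReal.ofReal (ε * C)) :
    ∫⁻ ω, E.indicator (fun ω => NN X D (Icc a b ∩ U) u ω) ω ∂P ≤ ENNReal.ofReal (C * (b - a)) := by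
  obtain ⟨e, he, he0, hel⟩ : ∃ e : ℕ → ℝ, (∀ n, 0 < e n) ∧ (∀ n, e n ≤ ε₁) ∧ Tendsto e atTop (𝓝 0) := by
    refine ⟨fun n => ε₁ * (1 / ((n:ℝ)+1)), fun n => by positivity, fun n => ?_, ?_⟩
    · have : 1 / ((n:ℝ)+1) ≤ 1 := by rw [div_le_one (by positivity)]; simp
      nlinarith
    · simpa using tendsto_one_div_add_atTop_nhds_zero_nat.const_mul ε₁
  set w : Ω → ℝ≥0∞ := E.indicator (fun ω => ENNReal.ofReal (sup Y ω + 1)) with hw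
  have hwm : Measurable w := ((h.measH hF).add_const 1).ennreal_ofReal.indicator hE
  set g : ℕ → Ω → ℝ≥0∞ := fun n ω => ENNReal.ofReal (e n)⁻¹ * (w ω * occ X a b U u (e n) ω) with hg
  have hgm : ∀ n, Measurable (g n) := fun n => (hwm.mul (h.meas_occ hU u (e n))).const_mul _
  have hI : ∀ n, ∫⁻ ω, g n ω ∂P ≤ ENNReal.ofReal (C * (b - a)) := by
    intro n
    have hen := he n
    simp only [hg]
    rw [lintegral_const_mul _ (show Measurable (fun ω => w ω * occ X a b U u (e n) ω) from hwm.mul (h.meas_occ hU u (e n)))]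
    calc _ ≤ ENNReal.ofReal (e n)⁻¹ * (ENNReal.ofReal (e n * C) * ENNReal.ofReal (b - a)) := by
          gcongr
          exact h.occ_le hU u (e n) hwm fun t ht htU => hC t ht htU (e n) (he n) (he0 n)
      _ = ENNReal.ofReal (C * (b - a)) := by
          rw [← ENNReal.ofReal_mul (by positivity), ← ENNReal.ofReal_mul (by positivity)]
          congr 1; field_simp
  calc _ ≤ ∫⁻ ω, liminf (fun n => g n ω) atTop ∂P := by
        refine lintegral_mono fun ω => ?_
        by_cases hω : ω ∈ E
        · rw [indicator_of_mem hω]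
          refine encard_le_of_forall fun F hFs => ?_
          have hH : 0 < sup Y ω + 1 := by have := sup_nonneg Y ω; linarith
          obtain ⟨ε₀, hε₀, hcount⟩ := count_le (g := fun t => X t ω) (u := u) hab hH (fun x hx y hy => by
            have := hF.hL y ⟨ha.trans hy.1, hy.2.trans hb⟩ x ⟨ha.trans hx.1, hx.2.trans hb⟩ ω
            have := abs_nonneg (y - x)
            nlinarith) hU F (fun t ht => by
              have := hFs ht
              exact ⟨this.1.1, this.1.2, this.2.1⟩)
          refine le_liminf_of_le (by isBoundedDefault) ?_
          filter_upwards [hel.eventually (gt_mem_nhds hε₀)] with n hn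
          have := hcount (e n) (he n) hn
          have hen := he n
          calc (F.card : ℝ≥0∞) = ENNReal.ofReal (e n)⁻¹ * (ENNReal.ofReal (sup Y ω + 1) *
                (F.card * ENNReal.ofReal (e n / (sup Y ω + 1)))) := by
                rw [mul_left_comm _ (F.card : ℝ≥0∞), mul_left_comm _ (F.card : ℝ≥0∞),
                  ← ENNReal.ofReal_mul hH.le, ← ENNReal.ofReal_mul (by positivity)]
                rw [show (e n)⁻¹ * ((sup Y ω + 1) * (e n / (sup Y ω + 1))) = 1 by field_simp]
                simp
            _ ≤ g n ω := by
                simp only [hg, hw, indicator_of_mem hω]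
                gcongr
                exact this
        · rw [indicator_of_notMem hω]; exact zero_le
    _ ≤ liminf (fun n => ∫⁻ ω, g n ω ∂P) atTop := lintegral_liminf_le hgm
    _ ≤ liminf (fun n : ℕ => ENNReal.ofReal (C * (b - a))) atTop := liminf_le_liminf (Eventually.of_forall hI)
    _ = _ := by simp

lemma Proc.bulinskaya (h : Proc P A B X D D2) (hF : Fam A B X D D2 Y) {a b v₀ u : ℝ} (ha : A ≤ a) (hb : b ≤ B) (hab : a < b)
    (hv₀ : 0 < v₀) (hv : ∀ t ∈ Icc a b, v₀ ≤ ∫ ω, X t ω * X t ω ∂P) (hu : 0 ≤ u) {s : ℝ}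
    (hs : ∀ t ∈ Icc a b, ∫ ω, X t ω * X t ω ∂P ≤ s) :
    P {ω | ∃ t ∈ Icc a b, X t ω = u ∧ D t ω = 0} = 0 := by
  have hsub : {ω | ∃ t ∈ Icc a b, X t ω = u ∧ D t ω = 0} ⊆
      ⋃ m : ℕ, {ω | (∃ t ∈ Icc a b, X t ω = u ∧ D t ω = 0) ∧ 2 * sup Y ω ≤ m + 1} := by
    intro ω hω
    obtain ⟨m, hm⟩ := exists_nat_ge (2 * sup Y ω)
    exact mem_iUnion.2 ⟨m, hω, by linarith⟩
  refine measure_mono_null hsub (measure_iUnion_null fun m => ?_)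
  set T := {ω | (∃ t ∈ Icc a b, X t ω = u ∧ D t ω = 0) ∧ 2 * sup Y ω ≤ m + 1} with hT
  set c := sbC v₀ * Real.exp (-u^2 / (2 * s)) with hc
  have hc0 : 0 < c := by have := sbC_pos hv₀; positivity
  have hm0 : (0:ℝ) < m + 1 := by positivity
  have key : ∀ d, 0 < d → d < (b - a) / 2 → (m + 1) * d^2 * u ≤ 1 →
      P T ≤ ENNReal.ofReal ((m + 1) * c * (b - a) * d) := by
    intro d hd hdb hdu
    have h1 := h.occ_le (a := a) (b := b) isOpen_univ u ((m+1) * d^2) (w := fun _ => 1) measurable_const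
      (C := ENNReal.ofReal (((m+1) * d^2) * c)) (fun t ht _ => by
        rw [lintegral_indicator_const (measurableSet_lt (by have := h.meas t; fun_prop) measurable_const), one_mul]
        exact h.gs.small_ball (mem_VX ⟨ha.trans ht.1, ht.2.trans hb⟩) hv₀ (hv t ht) (hs t ht) hu (by positivity) hdu)
    have h2 := mul_meas_ge_le_lintegral₀ (μ := P) (h.meas_occ (a := a) (b := b) isOpen_univ u ((m+1) * d^2)).aemeasurable (ENNReal.ofReal d)
    have h3 : T ⊆ {ω | ENNReal.ofReal d ≤ occ X a b univ u ((m+1) * d^2) ω} := by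
      rintro ω ⟨⟨t, ht, h1, h2⟩, h3⟩
      have := (h.path ω).tangent_time ha hb hab hm0 (fun x hx => (hF.hD2 x hx ω).trans h3) ht h1 h2 hd hdb
      simpa [occ] using this
    have h4 : ENNReal.ofReal d * P T ≤ ENNReal.ofReal d * ENNReal.ofReal ((m + 1) * c * (b - a) * d) := by
      calc _ ≤ ENNReal.ofReal d * P {ω | ENNReal.ofReal d ≤ occ X a b univ u ((m+1) * d^2) ω} := by gcongr
        _ ≤ _ := h2
        _ ≤ _ := by simpa using h1
        _ = _ := by
          rw [← ENNReal.ofReal_mul (by positivity), ← ENNReal.ofReal_mul hd.le]; congr 1; ring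
    exact (ENNReal.mul_le_mul_iff_right (by simpa using hd) (by simp)).1 h4
  have hlim : Tendsto (fun d : ℝ => ENNReal.ofReal ((m + 1) * c * (b - a) * d)) (𝓝[>] 0) (𝓝 0) := by
    have : Tendsto (fun d : ℝ => ENNReal.ofReal ((m + 1) * c * (b - a) * d)) (𝓝 0) (𝓝 (ENNReal.ofReal ((m + 1) * c * (b - a) * 0))) :=
      (ENNReal.continuous_ofReal.comp (by fun_prop : Continuous fun d : ℝ => (m + 1) * c * (b - a) * d)).tendsto 0
    simpa using this.mono_left nhdsWithin_le_nhds
  have hlim2 : ∀ᶠ d in 𝓝[>] (0:ℝ), (m + 1) * d^2 * u ≤ 1 := by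
    have : Tendsto (fun d : ℝ => (m + 1) * d^2 * u) (𝓝 0) (𝓝 ((m + 1) * 0^2 * u)) :=
      (by fun_prop : Continuous fun d : ℝ => (m + 1) * d^2 * u).tendsto 0
    have := (this.mono_left (nhdsWithin_le_nhds (s := Ioi (0:ℝ)))).eventually_lt_const (show ((m:ℝ) + 1) * 0^2 * u < 1 by norm_num)
    exact this.mono fun d hd => hd.le
  have hlim3 : ∀ᶠ d in 𝓝[>] (0:ℝ), d < (b - a) / 2 :=
    nhdsWithin_le_nhds (gt_mem_nhds (by linarith))
  refine le_antisymm (ge_of_tendsto hlim ?_) zero_le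
  filter_upwards [hlim2, hlim3, self_mem_nhdsWithin] with d h1 h2 h3
  exact key d h3 h2 h1

end GX
end

section
open MeasureTheory ProbabilityTheory Set Filter Topology
open scoped NNReal ENNReal

namespace GX
set_option linter.unusedSectionVars false
set_option linter.unusedVariables false

variable {Ω : Type*} [MeasurableSpace Ω] {P : Measure Ω} [IsProbabilityMeasure P]
  {A B : ℝ} {X D D2 : ℝ → Ω → ℝ} {Y : ℕ → Ω → ℝ}

lemma Proc.fern (h : Proc P A B X D D2) (hF : Fam A B X D D2 Y) :
    ∃ c > 0, ∃ M > 0, ∫⁻ ω, ENNReal.ofReal (Real.exp (c * sup Y ω ^ 2)) ∂P ≤ ENNReal.ofReal M := by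
  obtain ⟨c, hc, hM⟩ := h.gs.fernique hF.mem hF.bdd
  refine ⟨c, hc, (∫⁻ ω, ENNReal.ofReal (Real.exp (c * sup Y ω ^ 2)) ∂P).toReal + 1, by positivity, ?_⟩
  rw [ENNReal.le_ofReal_iff_toReal_le hM.ne (by positivity)]
  linarith

lemma exp_tail {Z : Ω → ℝ} (hZ : Measurable Z) {c M x : ℝ} (hc : 0 < c) (hx : 0 ≤ x)
    (hM : ∫⁻ ω, ENNReal.ofReal (Real.exp (c * Z ω ^ 2)) ∂P ≤ ENNReal.ofReal M) :
    P {ω | x ≤ Z ω} ≤ ENNReal.ofReal (M * Real.exp (-(c * x^2))) := by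
  have h2 := mul_meas_ge_le_lintegral₀ (μ := P) (f := fun ω => ENNReal.ofReal (Real.exp (c * Z ω ^ 2)))
    (by fun_prop) (ENNReal.ofReal (Real.exp (c * x^2)))
  have h3 : ENNReal.ofReal (Real.exp (c * x^2)) * P {ω | x ≤ Z ω} ≤
      ENNReal.ofReal (Real.exp (c * x^2)) * ENNReal.ofReal (M * Real.exp (-(c * x^2))) := by
    calc _ ≤ ENNReal.ofReal (Real.exp (c * x^2)) * P {ω | ENNReal.ofReal (Real.exp (c * x^2)) ≤ ENNReal.ofReal (Real.exp (c * Z ω ^ 2))} := by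
          refine mul_le_mul' le_rfl ?_
          refine measure_mono (μ := P) (t := {ω | ENNReal.ofReal (Real.exp (c * x^2)) ≤ ENNReal.ofReal (Real.exp (c * Z ω ^ 2))}) fun ω hω => ?_
          simp only [mem_ofPred_eq] at hω ⊢
          apply ENNReal.ofReal_le_ofReal
          gcongr
      _ ≤ _ := h2
      _ ≤ _ := hM
      _ = _ := by
          rw [← ENNReal.ofReal_mul (by positivity)]
          congr 1
          rw [mul_left_comm, ← Real.exp_add]; simp
  exact (ENNReal.mul_le_mul_iff_right (by simp [Real.exp_pos]) (by simp)).1 h3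

lemma Proc.cov_bd (h : Proc P A B X D D2) (hF : Fam A B X D D2 Y) {t : ℝ} (ht : t ∈ Icc A B) (n : ℕ) :
    |∫ ω, X t ω * Y n ω ∂P| ≤ ∫ ω, sup Y ω ^ 2 ∂P := by
  refine (abs_integral_le_integral_abs).trans (integral_mono_of_nonneg (Eventually.of_forall fun ω => abs_nonneg _) (h.intH2 hF)
    (Eventually.of_forall fun ω => ?_))
  have := abs_mul_le_sq (H := sup Y ω) (ka := 1) (kb := 1) (by simpa using hF.hX t ht ω) (by simpa using le_sup hF.bdd n ω)
  simpa using this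

lemma Proc.point (h : Proc P A B X D D2) (hF : Fam A B X D D2 Y) {v₀ S : ℝ} (hv₀ : 0 < v₀) (hS : 0 < S) :
    ∃ K₁ > 0, ∃ c₂ > 0, ∀ t ∈ Icc A B, ∀ s c u ε : ℝ, ∀ E : Set Ω,
      v₀ ≤ ∫ ω, X t ω * X t ω ∂P → ∫ ω, X t ω * X t ω ∂P ≤ s → s ≤ S → 0 ≤ c → 1 ≤ u → 0 < ε → ε * u ≤ 1/2 →
      (∀ ω ∈ E, 0 < c → ∃ n, 0 < Y n ω ∧ ∫ ω, X t ω * Y n ω ∂P ≤ -c) →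
      ∫⁻ ω, {ω | |X t ω - u| < ε}.indicator (E.indicator (fun ω => ENNReal.ofReal (sup Y ω + 1))) ω ∂P ≤
        ENNReal.ofReal (ε * (K₁ * (1 + u) * Real.exp (-(c₂ * c^2 * u^2)) * Real.exp (-u^2 / (2 * s)))) := by
  obtain ⟨cF, hcF, M, hM, hMF⟩ := h.fern hF
  set K := (∫ ω, sup Y ω ^ 2 ∂P) / v₀ with hK
  have hK0 : 0 ≤ K := div_nonneg (integral_nonneg fun ω => by positivity) hv₀.le
  set c₁ := cF / (1 + K)^2 with hc₁
  have hc₁0 : 0 < c₁ := by positivity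
  refine ⟨(1 + K) * Real.exp (1 / (2 * c₁)) * M * sbC v₀, by have := sbC_pos hv₀; positivity,
    c₁ / (8 * S^2), by positivity, ?_⟩
  intro t ht s c u ε E hv hvs hsS hc hu hε hεu hE
  set v := ∫ ω, X t ω * X t ω ∂P with hvdef
  have hv0 : 0 < v := hv₀.trans_le hv
  obtain ⟨Z, hZm, hind, hZ0, hZ1, hZ2, hZ3⟩ := h.gs.decouple hF.mem hF.bdd (mem_VX ht) hvdef.symm hv0
    (K := K) (fun n => (h.cov_bd hF ht n).trans (by
      rw [hK, div_mul_eq_mul_div, le_div_iff₀ hv₀]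
      exact mul_le_mul_of_nonneg_left hv (integral_nonneg fun ω => by positivity)))
  set L := c * u / (2 * S) with hL
  have hL0 : 0 ≤ L := by positivity
  have hε2 : ε ≤ 1/2 := by nlinarith
  set b₁ : Ω → ℝ≥0∞ := fun ω => ENNReal.ofReal ((1 + K) * (1 + u) * Real.exp (1 / (2 * c₁)) * Real.exp (-(c₁ * L^2 / 2)) * Real.exp (c₁ * Z ω ^ 2)) with hb₁
  set J : Set ℝ := {x | |x - u| < ε} with hJ
  have hJm : MeasurableSet J := measurableSet_lt (by fun_prop) measurable_const
  have hpt : ∀ ω, {ω | |X t ω - u| < ε}.indicator (E.indicator (fun ω => ENNReal.ofReal (sup Y ω + 1))) ω ≤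
      (J.indicator (fun _ => (1:ℝ≥0∞)) (X t ω)) * b₁ ω := by
    intro ω
    by_cases hω : |X t ω - u| < ε
    swap
    · rw [indicator_of_notMem (by exact hω)]; exact zero_le
    by_cases hωE : ω ∈ E
    swap
    · rw [indicator_of_mem (by exact hω), indicator_of_notMem hωE]; exact zero_le
    rw [indicator_of_mem (by exact hω), indicator_of_mem hωE, indicator_of_mem (by exact hω), one_mul]
    apply ENNReal.ofReal_le_ofReal
    have hx := abs_lt.1 hω
    have hx0 : u / 2 ≤ X t ω := by linarith
    have hx1 : |X t ω| ≤ u + 1 := by rw [abs_of_nonneg (by linarith)]; linarith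
    have hZL : L ≤ Z ω := by
      rcases hc.eq_or_lt with h0 | h0
      · rw [hL, ← h0]; simpa using hZ0 ω
      obtain ⟨n, hn1, hn2⟩ := hE ω hωE h0
      have := hZ3 n (c / v) (by rw [neg_mul, div_mul_cancel₀ _ hv0.ne']; exact hn2) ω (by linarith) hn1
      refine le_trans ?_ this
      rw [hL, div_mul_eq_mul_div, div_le_div_iff₀ (by positivity) hv0]
      have : v ≤ S := hvs.trans hsS
      calc c * u * v ≤ c * u * S := by gcongr
        _ = c * (u / 2) * (2 * S) := by ring
        _ ≤ c * X t ω * (2 * S) := by gcongr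
    have hz := hZ0 ω
    have e1 : sup Y ω + 1 ≤ (1 + K) * (1 + u) * (1 + Z ω) := by
      have := hZ1 ω
      have h2 : K * |X t ω| ≤ K * (u + 1) := by gcongr
      nlinarith [mul_nonneg hK0 hz, mul_nonneg (mul_nonneg hK0 hz) (by linarith : 0 ≤ u), mul_nonneg hz (by linarith : 0 ≤ u)]
    have e2 : 1 + Z ω ≤ Real.exp (1 / (2 * c₁)) * Real.exp (-(c₁ * L^2 / 2)) * Real.exp (c₁ * Z ω ^ 2) := by
      rw [← Real.exp_add, ← Real.exp_add]
      refine le_trans (by rw [add_comm]; exact Real.add_one_le_exp (Z ω)) (Real.exp_le_exp.2 ?_)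
      have q1 : Z ω ≤ 1 / (2 * c₁) + c₁ * Z ω ^ 2 / 2 := by
        have : 0 ≤ (c₁ * Z ω - 1)^2 / (2 * c₁) := by positivity
        have e : (c₁ * Z ω - 1)^2 / (2 * c₁) = 1 / (2 * c₁) + c₁ * Z ω ^ 2 / 2 - Z ω := by field_simp; ring
        linarith
      have q2 : c₁ * L^2 / 2 ≤ c₁ * Z ω^2/2 := by gcongr
      linarith
    calc _ ≤ _ := e1
      _ ≤ (1 + K) * (1 + u) * (Real.exp (1 / (2 * c₁)) * Real.exp (-(c₁ * L^2 / 2)) * Real.exp (c₁ * Z ω ^ 2)) := by gcongr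
      _ = _ := by ring
  have hEZ : ∫⁻ ω, ENNReal.ofReal (Real.exp (c₁ * Z ω ^ 2)) ∂P ≤ ENNReal.ofReal M := by
    refine le_trans (lintegral_mono fun ω => ENNReal.ofReal_le_ofReal (Real.exp_le_exp.2 ?_)) hMF
    have h1 : Z ω ≤ (1 + K) * sup Y ω := by
      have := hZ2 ω
      have h2 : K * |X t ω| ≤ K * sup Y ω := by gcongr; exact hF.hX t ht ω
      linarith
    calc c₁ * Z ω ^ 2 ≤ c₁ * ((1 + K) * sup Y ω)^2 := by gcongr; exact hZ0 ω
      _ = cF * sup Y ω ^ 2 := by rw [hc₁]; field_simp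
  have hb₁i : ∫⁻ ω, b₁ ω ∂P ≤ ENNReal.ofReal ((1 + K) * (1 + u) * Real.exp (1 / (2 * c₁)) * Real.exp (-(c₁ * L^2 / 2)) * M) := by
    simp only [hb₁]
    simp_rw [ENNReal.ofReal_mul (show 0 ≤ (1 + K) * (1 + u) * Real.exp (1 / (2 * c₁)) * Real.exp (-(c₁ * L^2 / 2)) by positivity)]
    rw [lintegral_const_mul _ (by fun_prop)]
    gcongr
  calc _ ≤ _ := lintegral_mono hpt
    _ = (∫⁻ ω, J.indicator (fun _ => (1:ℝ≥0∞)) (X t ω) ∂P) * ∫⁻ ω, b₁ ω ∂P := by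
        have hi : IndepFun (fun ω => J.indicator (fun _ => (1:ℝ≥0∞)) (X t ω)) b₁ P :=
          hind.comp (φ := J.indicator (fun _ => (1:ℝ≥0∞))) (ψ := fun z => ENNReal.ofReal ((1 + K) * (1 + u) * Real.exp (1 / (2 * c₁)) * Real.exp (-(c₁ * L^2 / 2)) * Real.exp (c₁ * z ^ 2)))
            (measurable_const.indicator hJm) (by fun_prop)
        exact lintegral_mul_eq_lintegral_mul_lintegral_of_indepFun
          ((measurable_const.indicator hJm).comp (h.meas t)) (by fun_prop) hi
    _ ≤ ENNReal.ofReal (ε * (sbC v₀ * Real.exp (-u^2 / (2 * s)))) * ENNReal.ofReal ((1 + K) * (1 + u) * Real.exp (1 / (2 * c₁)) * Real.exp (-(c₁ * L^2 / 2)) * M) := by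
        gcongr
        have : (fun ω => J.indicator (fun _ => (1:ℝ≥0∞)) (X t ω)) = {ω | |X t ω - u| < ε}.indicator (fun _ => 1) := by
          ext ω; rfl
        rw [this, lintegral_indicator_const (measurableSet_lt (by have := h.meas t; fun_prop) measurable_const), one_mul]
        exact h.gs.small_ball (mem_VX ht) hv₀ hv hvs (by linarith) hε (by linarith)
    _ = _ := by
        rw [← ENNReal.ofReal_mul (by have := sbC_pos hv₀; positivity)]
        congr 1
        have : Real.exp (-(c₁ * L^2 / 2)) = Real.exp (-(c₁ / (8 * S^2) * c^2 * u^2)) := by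
          congr 1; rw [hL]; field_simp; ring
        rw [this]; ring

end GX
end

section
open MeasureTheory ProbabilityTheory Set Filter Topology
open scoped NNReal ENNReal

namespace GX
set_option linter.unusedSectionVars false
set_option linter.unusedVariables false

variable {Ω : Type*} [MeasurableSpace Ω] {P : Measure Ω} [IsProbabilityMeasure P]
  {A B : ℝ} {X D D2 : ℝ → Ω → ℝ} {Y : ℕ → Ω → ℝ}

lemma Proc.outside (h : Proc P A B X D D2) (hF : Fam A B X D D2 Y) {K : Set ℝ} (hK : IsCompact K) (hKI : K ⊆ Icc A B)
    {s₁ s₂ : ℝ} (hs1 : 0 < s₁) (hs12 : s₁ < s₂) (hσ : ∀ t ∈ K, ∫ ω, X t ω * X t ω ∂P ≤ s₁) :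
    ∃ C > 0, ∀ u, 0 ≤ u → P {ω | ∃ t ∈ K, u ≤ |X t ω|} ≤ ENNReal.ofReal (C * Real.exp (-u^2 / (2 * s₂))) := by
  obtain ⟨cF, hcF, M, hM, hMF⟩ := h.fern hF
  have hs2 : 0 < s₂ := hs1.trans hs12
  set q := √(s₁ / s₂) with hq
  have hq0 : 0 < q := Real.sqrt_pos.2 (by positivity)
  have hq2 : q^2 = s₁ / s₂ := Real.sq_sqrt (by positivity)
  have hq1 : q < 1 := by
    rw [hq, Real.sqrt_lt' one_pos, div_lt_iff₀ hs2]; linarith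
  set η := √(2 * s₂ * cF) * (1 - q) with hη
  have hη0 : 0 < η := mul_pos (Real.sqrt_pos.2 (by positivity)) (by linarith)
  have hη2 : η^2 = 2 * s₂ * cF * (1-q)^2 := by rw [hη, mul_pow, Real.sq_sqrt (by positivity)]
  obtain ⟨T, hTK, hTf, hT⟩ := hK.totallyBounded.exists_subset (Metric.dist_mem_uniformity hη0)
  refine ⟨hTf.toFinset.card * 2 + M, by positivity, fun u hu => ?_⟩
  have hsub : {ω | ∃ t ∈ K, u ≤ |X t ω|} ⊆ (⋃ y ∈ hTf.toFinset, {ω | q * u ≤ |X y ω|}) ∪ {ω | (1-q) * u / η ≤ sup Y ω} := by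
    rintro ω ⟨t, ht, hut⟩
    obtain ⟨y, hy, hyt⟩ := mem_iUnion₂.1 (hT ht)
    have hd : |t - y| < η := by simpa [Real.dist_eq] using hyt
    by_cases h1 : q * u ≤ |X y ω|
    · exact Or.inl (mem_iUnion₂.2 ⟨y, by simpa using hy, h1⟩)
    · right
      push Not at h1
      have h2 := hF.hL t (hKI ht) y (hKI (hTK hy)) ω
      have h3 : |X t ω| ≤ |X t ω - X y ω| + |X y ω| := by
        have := abs_add_le (X t ω - X y ω) (X y ω); simpa using this
      have h4 : sup Y ω * |t - y| ≤ sup Y ω * η := mul_le_mul_of_nonneg_left hd.le (sup_nonneg Y ω)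
      show (1-q) * u / η ≤ sup Y ω
      rw [div_le_iff₀ hη0]
      linarith
  have hH := exp_tail (P := P) (h.measH hF) hcF (x := (1-q) * u / η) (by
    have : 0 ≤ 1 - q := by linarith
    positivity) hMF
  have e1 : -(cF * ((1-q) * u / η)^2) = -u^2 / (2 * s₂) := by
    rw [div_pow, hη2, mul_pow]
    have : (1 - q) ≠ 0 := by linarith
    field_simp
  rw [e1] at hH
  have hpt : ∀ y ∈ hTf.toFinset, P {ω | q * u ≤ |X y ω|} ≤ ENNReal.ofReal (2 * Real.exp (-u^2 / (2 * s₂))) := by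
    intro y hy
    have hyK := hTK (by simpa using hy : y ∈ T)
    have := h.gs.tail (mem_VX (hKI hyK)) hs1 (hσ y hyK) (u := q * u) (by positivity)
    have e2 : -(q * u)^2 / (2 * s₁) = -u^2 / (2 * s₂) := by
      rw [mul_pow, hq2]; field_simp
    rwa [e2] at this
  calc _ ≤ _ := measure_mono hsub
    _ ≤ _ := measure_union_le _ _
    _ ≤ (∑ y ∈ hTf.toFinset, P {ω | q * u ≤ |X y ω|}) + P {ω | (1-q) * u / η ≤ sup Y ω} := by
        gcongr; exact measure_biUnion_finset_le _ _
    _ ≤ (∑ y ∈ hTf.toFinset, ENNReal.ofReal (2 * Real.exp (-u^2 / (2 * s₂)))) + ENNReal.ofReal (M * Real.exp (-u^2 / (2 * s₂))) := by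
        gcongr with y hy
        exact hpt y hy
    _ = _ := by
        rw [Finset.sum_const, nsmul_eq_mul, ← ENNReal.ofReal_natCast, ← ENNReal.ofReal_mul (by positivity),
          ← ENNReal.ofReal_add (by positivity) (by positivity)]
        congr 1; ring

lemma Proc.both (h : Proc P A B X D D2) (hF : Fam A B X D D2 Y) {a b ρ cF M u S : ℝ} (ha : A ≤ a) (hb : b ≤ B)
    (hρ : 0 < ρ) (hab : b - a ≤ 2 * ρ) (hcF : 0 < cF) (hM0 : 0 < M) (hS : 0 < S) (hρ2 : ρ^2 ≤ cF * S)
    (hM : ∫⁻ ω, ENNReal.ofReal (Real.exp (cF * sup Y ω ^ 2)) ∂P ≤ ENNReal.ofReal M) (hu : 0 ≤ u) :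
    P ({ω | ∃ t ∈ Icc a b, u ≤ X t ω} ∩ {ω | ∃ t ∈ Icc a b, u ≤ - X t ω}) ≤
      ENNReal.ofReal (M * (Real.exp (-(1 / (2 * S) * u^2)) * Real.exp (-u^2 / (2 * S)))) := by
  have hsub : {ω | ∃ t ∈ Icc a b, u ≤ X t ω} ∩ {ω | ∃ t ∈ Icc a b, u ≤ - X t ω} ⊆ {ω | u / ρ ≤ sup Y ω} := by
    rintro ω ⟨⟨s, hs, h1⟩, t, ht, h2⟩
    have h3 := hF.hL s ⟨ha.trans hs.1, hs.2.trans hb⟩ t ⟨ha.trans ht.1, ht.2.trans hb⟩ ω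
    have h4 : |s - t| ≤ 2 * ρ := by
      rw [abs_le]; constructor <;> linarith [hs.1, hs.2, ht.1, ht.2]
    have h5 : sup Y ω * |s - t| ≤ sup Y ω * (2 * ρ) := mul_le_mul_of_nonneg_left h4 (sup_nonneg Y ω)
    have h6 := le_abs_self (X s ω - X t ω)
    show u / ρ ≤ sup Y ω
    rw [div_le_iff₀ hρ]
    linarith
  refine (measure_mono hsub).trans ((exp_tail (P := P) (h.measH hF) hcF (x := u / ρ) (by positivity) hM).trans ?_)
  apply ENNReal.ofReal_le_ofReal
  rw [← Real.exp_add]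
  gcongr
  have : u^2 / S ≤ cF * (u / ρ)^2 := by
    rw [div_pow, mul_div_assoc', div_le_div_iff₀ hS (by positivity)]
    nlinarith [mul_le_mul_of_nonneg_left hρ2 (sq_nonneg u)]
  have e : -(1 / (2 * S) * u^2) + -u^2 / (2 * S) = -(u^2 / S) := by field_simp; ring
  linarith

/-- event of a positive rational second difference -/
def EE (X : ℝ → Ω → ℝ) (a b : ℝ) : Set Ω := {ω | ∃ x y z : ℚ, (x:ℝ) ∈ Icc a b ∧ (y:ℝ) ∈ Icc a b ∧ (z:ℝ) ∈ Icc a b ∧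
  0 < dd3 (fun t => X t ω) x y z}

lemma Proc.meas_EE (h : Proc P A B X D D2) {a b : ℝ} (ha : A ≤ a) (hb : b ≤ B) : MeasurableSet (EE X a b) := by
  have : EE X a b = ⋃ x : ℚ, ⋃ y : ℚ, ⋃ z : ℚ, ⋃ (_ : (x:ℝ) ∈ Icc a b ∧ (y:ℝ) ∈ Icc a b ∧ (z:ℝ) ∈ Icc a b),
      {ω | 0 < dd3 (fun t => X t ω) x y z} := by
    ext ω
    simp only [EE, mem_ofPred_eq, mem_iUnion, exists_prop, and_assoc]
  rw [this]
  refine MeasurableSet.iUnion fun x => MeasurableSet.iUnion fun y => MeasurableSet.iUnion fun z => MeasurableSet.iUnion fun hh => ?_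
  have hs : Icc a b ⊆ Icc A B := Icc_subset_Icc ha hb
  exact measurableSet_lt measurable_const (h.gs.meas _ (dd3_mem (hs hh.1) (hs hh.2.1) (hs hh.2.2)))

lemma Proc.combine (h : Proc P A B X D D2) {a b u e : ℝ} {M Ko : Set ℝ} (ha : A ≤ a) (hb : b ≤ B) (hab : a < b)
    (hM : IsCompact M) (hMI : M ⊆ Icc a b) (hKo : Icc A B ⊆ Icc a b ∪ Ko) (he : 0 ≤ e)
    (h0 : P {ω | ∃ t ∈ Icc a b, X t ω = u ∧ D t ω = 0} = 0)
    (h1 : P {ω | u ≤ X a ω} ≤ ENNReal.ofReal e)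
    (h2 : ∫⁻ ω, (EE X a b).indicator (fun ω => NN X D (Icc a b ∩ univ) u ω) ω ∂P ≤ ENNReal.ofReal e)
    (h3 : ∫⁻ ω, NN X D (Icc a b ∩ Mᶜ) u ω ∂P ≤ ENNReal.ofReal e)
    (h4 : P {ω | ∃ t ∈ Ko, u ≤ |X t ω|} ≤ ENNReal.ofReal e)
    (h5 : P ({ω | ∃ t ∈ Icc a b, u ≤ X t ω} ∩ {ω | ∃ t ∈ Icc a b, u ≤ - X t ω}) ≤ ENNReal.ofReal e) :
    |(P {ω | ∃ t ∈ Icc A B, u ≤ |X t ω|}).toReal - 2 * ∫ ω, ((ups X D M u ω).ncard : ℝ) ∂P| ≤ 5 * e := by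
  have hII : Icc a b ⊆ Icc A B := Icc_subset_Icc ha hb
  set Ep := {ω | ∃ t ∈ Icc a b, u ≤ X t ω} with hEp
  set Em := {ω | ∃ t ∈ Icc a b, u ≤ - X t ω} with hEm
  have hEpm : MeasurableSet Ep := h.meas_hit isCompact_Icc hII u
  have hEmm : MeasurableSet Em := h.meas_hit_neg isCompact_Icc hII u
  have hsym : P Em = P Ep := h.symm isCompact_Icc hII u
  have hNM := h.meas_NN hM (hMI.trans hII) u
  have hNI := h.meas_NN (isCompact_Icc (a := a) (b := b)) hII u
  set n := ∫⁻ ω, NN X D M u ω ∂P with hn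
  have i1 : ∫⁻ ω, NN X D (Icc a b) u ω ∂P ≤ n + ENNReal.ofReal e := by
    calc _ ≤ ∫⁻ ω, NN X D M u ω + NN X D (Icc a b ∩ Mᶜ) u ω ∂P := by
          refine lintegral_mono fun ω => ?_
          simp only [NN]
          rw [← ENat.toENNReal_add]
          refine ENat.toENNReal_le.2 ((encard_le_encard ?_).trans (encard_union_le _ _))
          rintro t ⟨ht, h1⟩
          by_cases htM : t ∈ M
          · exact Or.inl ⟨htM, h1⟩
          · exact Or.inr ⟨⟨ht, htM⟩, h1⟩
      _ = _ := lintegral_add_left hNM _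
      _ ≤ _ := by gcongr
  have i2 : P Ep ≤ ENNReal.ofReal e + ∫⁻ ω, NN X D (Icc a b) u ω ∂P := by
    have hs : Ep ⊆ ({ω | u ≤ X a ω} ∪ {ω | ∃ t ∈ Icc a b, X t ω = u ∧ D t ω = 0}) ∪ {ω | 1 ≤ NN X D (Icc a b) u ω} := by
      intro ω hω
      by_cases c1 : u ≤ X a ω
      · exact Or.inl (Or.inl c1)
      by_cases c2 : ∃ t ∈ Icc a b, X t ω = u ∧ D t ω = 0
      · exact Or.inl (Or.inr c2)
      right
      push Not at c1 c2
      obtain ⟨t, ht, ht1⟩ := (h.path ω).hit ha hb c1 hω c2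
      show 1 ≤ NN X D (Icc a b) u ω
      have : (1:ℕ∞) ≤ (ups X D (Icc a b) u ω).encard := one_le_encard_iff_nonempty.2 ⟨t, ht, ht1⟩
      unfold NN
      exact_mod_cast this
    calc P Ep ≤ _ := measure_mono hs
      _ ≤ _ := measure_union_le _ _
      _ ≤ (P {ω | u ≤ X a ω} + P {ω | ∃ t ∈ Icc a b, X t ω = u ∧ D t ω = 0}) + P {ω | 1 ≤ NN X D (Icc a b) u ω} := by
          gcongr; exact measure_union_le _ _
      _ ≤ _ := by
          rw [h0, add_zero]
          gcongr
          simpa using mul_meas_ge_le_lintegral₀ (μ := P) hNI.aemeasurable 1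
  have i3 : n ≤ P Ep + ENNReal.ofReal e := by
    have : P Ep = ∫⁻ ω, Ep.indicator (fun _ => 1) ω ∂P := by
      rw [lintegral_indicator_const hEpm, one_mul]
    rw [this]
    calc n ≤ ∫⁻ ω, Ep.indicator (fun _ => 1) ω + (EE X a b).indicator (fun ω => NN X D (Icc a b ∩ univ) u ω) ω ∂P := by
          refine lintegral_mono fun ω => ?_
          by_cases hω : ω ∈ EE X a b
          · rw [indicator_of_mem hω]
            refine le_add_left ?_
            unfold NN
            refine ENat.toENNReal_le.2 (encard_le_encard ?_)
            rintro t ⟨ht, h1⟩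
            exact ⟨⟨hMI ht, trivial⟩, h1⟩
          · rw [indicator_of_notMem hω, add_zero]
            have hss : (ups X D M u ω).Subsingleton := by
              intro s hs t ht
              by_contra hne
              apply hω
              rcases lt_or_gt_of_ne hne with hlt | hlt
              · exact (h.path ω).two_crossings ha hb (hMI hs.1) (hMI ht.1) hlt hs.2.1 ht.2.1 ht.2.2
              · exact (h.path ω).two_crossings ha hb (hMI ht.1) (hMI hs.1) hlt ht.2.1 hs.2.1 hs.2.2
            rcases hss.eq_empty_or_singleton with h0 | ⟨t, h0⟩
            · simp [NN, h0]
            · have ht : t ∈ ups X D M u ω := by rw [h0]; rfl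
              rw [indicator_of_mem (show ω ∈ Ep from ⟨t, hMI ht.1, ht.2.1.ge⟩)]
              simp [NN, h0]
      _ = _ := lintegral_add_left (measurable_const.indicator hEpm) _
      _ ≤ _ := by gcongr
  set q := P {ω | ∃ t ∈ Icc A B, u ≤ |X t ω|} with hq
  have i4 : q ≤ P Ep + P Ep + ENNReal.ofReal e := by
    have hs : {ω | ∃ t ∈ Icc A B, u ≤ |X t ω|} ⊆ (Ep ∪ Em) ∪ {ω | ∃ t ∈ Ko, u ≤ |X t ω|} := by
      rintro ω ⟨t, ht, h1⟩
      rcases hKo ht with h2 | h2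
      · rcases le_abs.1 h1 with h3 | h3
        · exact Or.inl (Or.inl ⟨t, h2, h3⟩)
        · exact Or.inl (Or.inr ⟨t, h2, h3⟩)
      · exact Or.inr ⟨t, h2, h1⟩
    calc q ≤ _ := measure_mono hs
      _ ≤ _ := measure_union_le _ _
      _ ≤ (P Ep + P Em) + P {ω | ∃ t ∈ Ko, u ≤ |X t ω|} := by gcongr; exact measure_union_le _ _
      _ ≤ _ := by rw [hsym]; gcongr
  have i5 : P Ep + P Ep ≤ q + ENNReal.ofReal e := by
    have := measure_union_add_inter (μ := P) Ep hEmm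
    rw [hsym] at this
    rw [← this]
    gcongr
    refine measure_mono (μ := P) ?_
    rintro ω (⟨t, ht, h1⟩ | ⟨t, ht, h1⟩)
    · exact ⟨t, hII ht, h1.trans (le_abs_self _)⟩
    · exact ⟨t, hII ht, h1.trans (neg_le_abs _)⟩
  have hpt : P Ep ≠ ⊤ := measure_ne_top _ _
  have hqt : q ≠ ⊤ := measure_ne_top _ _
  have hnt : n ≠ ⊤ := ne_top_of_le_ne_top (by simp [hpt]) i3
  rw [h.integral_ncard hM (hMI.trans hII) u hnt]
  have i6 : P Ep ≤ ENNReal.ofReal e + (n + ENNReal.ofReal e) := i2.trans (by gcongr)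
  have tr : ∀ {x y : ℝ≥0∞}, y ≠ ⊤ → x ≤ y → x.toReal ≤ y.toReal := fun hy hxy => ENNReal.toReal_mono hy hxy
  have r3 := tr (by simp [hpt]) i3
  have r4 := tr (by simp [hpt]) i4
  have r5 := tr (by simp [hqt]) i5
  have r6 := tr (by simp [hnt]) i6
  rw [ENNReal.toReal_add hpt (by simp), ENNReal.toReal_ofReal he] at r3
  rw [ENNReal.toReal_add (by simp [hpt]) (by simp), ENNReal.toReal_add hpt hpt, ENNReal.toReal_ofReal he] at r4
  rw [ENNReal.toReal_add hqt (by simp), ENNReal.toReal_add hpt hpt, ENNReal.toReal_ofReal he] at r5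
  rw [ENNReal.toReal_add (by simp) (by simp [hnt]), ENNReal.toReal_add hnt (by simp), ENNReal.toReal_ofReal he] at r6
  rw [abs_le]; constructor <;> linarith

end GX
end

section
open MeasureTheory ProbabilityTheory Set Filter Topology
open scoped NNReal ENNReal

namespace GX
set_option linter.unusedSectionVars false
set_option linter.unusedVariables false

variable {Ω : Type*} [MeasurableSpace Ω] {P : Measure Ω} [IsProbabilityMeasure P]
  {A B : ℝ} {X D D2 : ℝ → Ω → ℝ} {Y : ℕ → Ω → ℝ}

lemma rate_bound {κ S : ℝ} (hκ : 0 < κ) (hS : 0 < S) (u : ℝ) :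
    (1 + u) * Real.exp (-(κ * u^2)) * Real.exp (-u^2 / (2 * S)) ≤
      Real.exp (1 / (2 * κ)) * Real.exp (-(u^2) * (1 + κ * S) / (2 * S)) := by
  have h1 : 1 + u ≤ Real.exp (κ * u^2 / 2 + 1 / (2 * κ)) := by
    refine le_trans (by rw [add_comm]; exact Real.add_one_le_exp u) (Real.exp_le_exp.2 ?_)
    have : 0 ≤ (κ * u - 1)^2 / (2 * κ) := by positivity
    have e : (κ * u - 1)^2 / (2 * κ) = 1 / (2 * κ) + κ * u ^ 2 / 2 - u := by field_simp; ring
    linarith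
  calc _ ≤ Real.exp (κ * u^2 / 2 + 1 / (2 * κ)) * Real.exp (-(κ * u^2)) * Real.exp (-u^2 / (2 * S)) := by gcongr
    _ = _ := by
      rw [← Real.exp_add, ← Real.exp_add, ← Real.exp_add]
      congr 1; field_simp; ring

theorem Proc.main (h : Proc P A B X D D2) {t₀ : ℝ} (ht₀ : t₀ ∈ Ioc A B)
    (hσc : ContinuousOn (fun t => ∫ ω, X t ω * X t ω ∂P) (Icc A B))
    (hmax : ∀ t ∈ Icc A B, ∫ ω, X t ω * X t ω ∂P ≤ ∫ ω, X t₀ ω * X t₀ ω ∂P)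
    (huniq : ∀ t ∈ Icc A B, ∫ ω, X t ω * X t ω ∂P = ∫ ω, X t₀ ω * X t₀ ω ∂P → t = t₀)
    (hder : HasDerivWithinAt (fun t => ∫ ω, X t ω * X t ω ∂P) 0 (Icc A B) t₀)
    (hnd : P {ω | D t₀ ω = 0} < 1) :
    ∃ δ > (0:ℝ), ∃ χ > (0:ℝ), ∃ C > (0:ℝ), ∃ u₀ > (0:ℝ), ∀ u ≥ u₀,
      |(P {ω | ∃ t ∈ Set.Icc A B, u ≤ |X t ω|}).toReal
          - 2 * ∫ ω, ((ups X D {t ∈ Icc A B | (∫ ω, X t₀ ω * X t₀ ω ∂P) / (1 + δ) ≤ ∫ ω, X t ω * X t ω ∂P} u ω).ncard : ℝ) ∂P|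
        ≤ C * Real.exp (-(u ^ 2) * (1 + χ) / (2 * ∫ ω, X t₀ ω * X t₀ ω ∂P)) := by
  obtain ⟨Y, hF⟩ := h.exists_fam
  have hneg := h.neg hF ht₀ hmax hder hnd
  have ht₀' : t₀ ∈ Icc A B := ⟨ht₀.1.le, ht₀.2⟩
  set σ : ℝ → ℝ := fun t => ∫ ω, X t ω * X t ω ∂P with hσ
  set S := ∫ ω, X t₀ ω * X t₀ ω ∂P with hSdef
  have hS : 0 < S := by
    have h0 : 0 ≤ S := integral_nonneg fun ω => mul_self_nonneg _
    rcases h0.lt_or_eq with h1 | h1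
    · exact h1
    exfalso
    have h2 := (integral_eq_zero_iff_of_nonneg (fun ω => mul_self_nonneg (X t₀ ω)) (h.intXX hF ht₀' ht₀')).1 h1.symm
    have : ∫ ω, X t₀ ω * D2 t₀ ω ∂P = 0 := by
      refine integral_eq_zero_of_ae ?_
      filter_upwards [h2] with ω hω
      have : X t₀ ω = 0 := by simpa using hω
      simp [this]
    linarith
  obtain ⟨ρc, hρc, c, hc, hcov⟩ := h.cov hF ht₀' hneg
  obtain ⟨cF, hcF, M, hM, hMF⟩ := h.fern hF
  obtain ⟨ρσ, hρσ, hσρ⟩ : ∃ ρ > 0, ∀ t ∈ Icc A B, |t - t₀| < ρ → S / 2 ≤ σ t := by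
    have h1 := (hσc t₀ ht₀').eventually (lt_mem_nhds (show S / 2 < σ t₀ by show S / 2 < S; linarith))
    obtain ⟨ρ, hρ, h2⟩ := Metric.mem_nhdsWithin_iff.1 h1
    refine ⟨ρ, hρ, fun t ht htr => ?_⟩
    have : t ∈ Metric.ball t₀ ρ ∩ Icc A B := ⟨by simpa [Real.dist_eq] using htr, ht⟩
    exact (h2 this).le
  obtain ⟨ρ, hρ, hρ1, hρ2, hρ3, hρ4⟩ : ∃ ρ > 0, ρ ≤ ρc ∧ ρ < ρσ ∧ A < t₀ - ρ ∧ ρ^2 ≤ cF * S := by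
    refine ⟨min (min ρc (ρσ/2)) (min ((t₀ - A)/2) (√(cF * S))), ?_, ?_, ?_, ?_, ?_⟩
    · have := ht₀.1
      have := Real.sqrt_pos.2 (mul_pos hcF hS)
      simp only [gt_iff_lt, lt_min_iff]; refine ⟨⟨?_, ?_⟩, ?_, ?_⟩ <;> linarith
    · exact (min_le_left _ _).trans (min_le_left _ _)
    · exact ((min_le_left _ _).trans (min_le_right _ _)).trans_lt (by linarith)
    · have := (min_le_right (min ρc (ρσ/2)) (min ((t₀ - A)/2) (√(cF * S)))).trans (min_le_left _ _)
      have := ht₀.1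
      linarith
    · have h1 := (min_le_right (min ρc (ρσ/2)) (min ((t₀ - A)/2) (√(cF * S)))).trans (min_le_right _ _)
      have := ht₀.1
      have := Real.sqrt_nonneg (cF * S)
      refine (pow_le_pow_left₀ ?_ h1 2).trans (Real.sq_sqrt (mul_pos hcF hS).le).le
      refine le_min (le_min hρc.le (by linarith)) (le_min (by linarith) this)
  set a := t₀ - ρ with ha
  set b := min B (t₀ + ρ) with hb
  have hb1 : b ≤ B := min_le_left _ _
  have hb2 : b ≤ t₀ + ρ := min_le_right _ _
  have hb3 : t₀ ≤ b := le_min ht₀.2 (by linarith)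
  have hab : a < b := by linarith
  have hII : Icc a b ⊆ Icc A B := Icc_subset_Icc hρ3.le hb1
  have hIρ : ∀ t ∈ Icc a b, |t - t₀| ≤ ρ := fun t ht => by
    rw [abs_le]; constructor <;> linarith [ht.1, ht.2]
  have hIv : ∀ t ∈ Icc a b, S / 2 ≤ σ t := fun t ht => hσρ t (hII ht) ((hIρ t ht).trans_lt hρ2)
  -- outside
  set Ko := {t ∈ Icc A B | ρ ≤ |t - t₀|} with hKo
  have hKoc : IsCompact Ko := isCompact_Icc.inter_right (isClosed_le continuous_const (show Continuous fun t : ℝ => |t - t₀| by fun_prop))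
  have hKoI : Ko ⊆ Icc A B := fun t ht => ht.1
  have haKo : a ∈ Ko := ⟨⟨hρ3.le, hab.le.trans hb1⟩, by rw [ha]; simp [abs_of_pos hρ]⟩
  have hcover : ∀ t ∈ Icc A B, t ∉ Ko → t ∈ Icc a b := by
    intro t ht hn
    have : |t - t₀| < ρ := by by_contra hh; exact hn ⟨ht, not_lt.1 hh⟩
    have := abs_lt.1 this
    exact ⟨by linarith, le_min ht.2 (by linarith)⟩
  obtain ⟨s₁, hs1, hs1S, hs1σ⟩ : ∃ s₁ > 0, s₁ < S ∧ ∀ t ∈ Ko, σ t ≤ s₁ := by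
    obtain ⟨t₁, ht₁, hm⟩ := hKoc.exists_isMaxOn ⟨a, haKo⟩ (hσc.mono hKoI)
    have hlt : σ t₁ < S := by
      refine lt_of_le_of_ne (hmax t₁ ht₁.1) fun he => ?_
      have := huniq t₁ ht₁.1 he
      have h2 := ht₁.2
      rw [this] at h2; simp at h2; linarith
    refine ⟨max (σ t₁) (S / 2), lt_max_of_lt_right (by linarith), max_lt hlt (by linarith), fun t ht => le_max_of_le_left (hm ht)⟩
  set s₂ := (s₁ + S) / 2 with hs₂
  have hs12 : s₁ < s₂ := by rw [hs₂]; linarith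
  have hs2S : s₂ < S := by rw [hs₂]; linarith
  have hs20 : 0 < s₂ := hs1.trans hs12
  have hδ : S / (1 + (S / s₂ - 1)) = s₂ := by rw [add_sub_cancel, div_div_cancel₀ hS.ne']
  have hδ0 : 0 < S / s₂ - 1 := by rw [sub_pos, one_lt_div hs20]; exact hs2S
  obtain ⟨Co, hCo, hout⟩ := h.outside hF hKoc hKoI hs1 hs12 hs1σ
  obtain ⟨K₁, hK₁, c₂, hc₂, hpoint⟩ := h.point hF (v₀ := S / 2) (S := S) (by linarith) hS
  set Mδ := {t ∈ Icc A B | s₂ ≤ σ t} with hMδ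
  have hMcl : IsClosed Mδ := by
    have := hσc.preimage_isClosed_of_isClosed isClosed_Icc (isClosed_Ici (a := s₂))
    exact this
  have hMI : Mδ ⊆ Icc a b := by
    rintro t ⟨ht, h2⟩
    refine hcover t ht fun hk => ?_
    have := hs1σ t hk
    linarith
  have hMc : IsCompact Mδ := isCompact_Icc.of_isClosed_subset hMcl hMI
  -- rates
  obtain ⟨κ, hκ, hκ1, hκ2, hκ3⟩ : ∃ κ > 0, κ ≤ 1 / (2 * s₂) - 1 / (2 * S) ∧ κ ≤ c₂ * c^2 ∧ κ ≤ 1 / (2 * S) := by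
    refine ⟨min (1 / (2 * s₂) - 1 / (2 * S)) (min (c₂ * c^2) (1 / (2 * S))), ?_, min_le_left _ _,
      (min_le_right _ _).trans (min_le_left _ _), (min_le_right _ _).trans (min_le_right _ _)⟩
    refine lt_min ?_ (lt_min (by positivity) (by positivity))
    rw [sub_pos]
    exact one_div_lt_one_div_of_lt (by positivity) (by linarith)
  set C := 1 + K₁ * (b - a) + Co + M with hC
  have hba : 0 < b - a := by linarith
  have hKb : 0 < K₁ * (b - a) := by positivity
  have hC0 : 0 < C := by positivity
  refine ⟨S / s₂ - 1, hδ0, κ * S, by positivity, 5 * C * Real.exp (1 / (2 * κ)), by positivity, 1, one_pos, fun u hu => ?_⟩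
  rw [hδ]
  have hu0 : 0 ≤ u := by linarith
  set e0 := (1 + u) * Real.exp (-(κ * u^2)) * Real.exp (-u^2 / (2 * S)) with he0
  have he00 : 0 < e0 := by positivity
  have hsq := sq_nonneg u
  have hr1 : Real.exp (-u^2 / (2 * s₂)) ≤ Real.exp (-(κ * u^2)) * Real.exp (-u^2 / (2 * S)) := by
    rw [← Real.exp_add]
    apply Real.exp_le_exp.2
    have e1 : -u^2 / (2 * s₂) = -(1 / (2 * s₂) * u^2) := by ring
    have e2 : -u^2 / (2 * S) = -(1 / (2 * S) * u^2) := by ring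
    rw [e1, e2]
    nlinarith [mul_le_mul_of_nonneg_right hκ1 hsq]
  have hr1' : Real.exp (-u^2 / (2 * s₂)) ≤ e0 := by
    refine hr1.trans ?_
    rw [he0, mul_assoc]
    exact le_mul_of_one_le_left (by positivity) (by linarith)
  have hr2 : Real.exp (-(c₂ * c^2 * u^2)) ≤ Real.exp (-(κ * u^2)) :=
    Real.exp_le_exp.2 (neg_le_neg (mul_le_mul_of_nonneg_right hκ2 hsq))
  have hr3 : Real.exp (-(1 / (2 * S) * u^2)) ≤ Real.exp (-(κ * u^2)) :=
    Real.exp_le_exp.2 (neg_le_neg (mul_le_mul_of_nonneg_right hκ3 hsq))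
  have fin : ∀ x : ℝ, x ≤ C → x * e0 ≤ C * e0 := fun x hx => mul_le_mul_of_nonneg_right hx he00.le
  have hcomb := h.combine (u := u) (e := C * e0) (M := Mδ) (Ko := Ko) hρ3.le hb1 hab hMc hMI
    (fun t ht => by
      by_cases hk : t ∈ Ko
      · exact Or.inr hk
      · exact Or.inl (hcover t ht hk)) (by positivity)
    (h.bulinskaya hF hρ3.le hb1 hab (show 0 < S / 2 by linarith) hIv hu0 (s := S) (fun t ht => hmax t (hII ht)))
    ?_ ?_ ?_ ?_ ?_
  · refine hcomb.trans ?_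
    have := rate_bound hκ hS u
    calc 5 * (C * e0) ≤ 5 * (C * (Real.exp (1 / (2 * κ)) * Real.exp (-(u^2) * (1 + κ * S) / (2 * S)))) := by gcongr
      _ = _ := by ring
  · refine (h.gs.tail_one (mem_VX haKo.1) hs20 ((hs1σ a haKo).trans hs12.le) hu0).trans (ENNReal.ofReal_le_ofReal ?_)
    refine hr1'.trans ?_
    have := fin 1 (by rw [hC]; linarith)
    linarith
  · refine (h.count hF hρ3.le hb1 hab isOpen_univ (ε₁ := 1 / (2 * u)) (by positivity)
      (C := K₁ * (1 + u) * Real.exp (-(c₂ * c^2 * u^2)) * Real.exp (-u^2 / (2 * S))) (by positivity) (h.meas_EE hρ3.le hb1)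
      (fun t ht _ ε hε hε1 => ?_)).trans (ENNReal.ofReal_le_ofReal ?_)
    · refine hpoint t (hII ht) S c u ε (EE X a b) (hIv t ht) (hmax t (hII ht)) le_rfl hc.le hu hε ?_ ?_
      · calc ε * u ≤ 1 / (2 * u) * u := by gcongr
          _ = 1 / 2 := by field_simp
      · rintro ω ⟨x, y, z, hx, hy, hz, hpos⟩ -
        obtain ⟨n, hn⟩ := hF.h3 x y z (hII hx) (hII hy) (hII hz)
        refine ⟨n, by rw [hn]; exact hpos, ?_⟩
        rw [hn]
        have hxyz : (x:ℝ) < y ∧ (y:ℝ) < z := by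
          by_contra hcon
          simp only [dd3, if_neg hcon] at hpos
          exact lt_irrefl _ hpos
        exact hcov x y z t (hII hx) (hII hz) (hII ht) hxyz.1 hxyz.2 ((hIρ x hx).trans hρ1) ((hIρ z hz).trans hρ1)
          ((hIρ t ht).trans hρ1)
    · refine le_trans ?_ (fin (K₁ * (b - a)) (by rw [hC]; linarith))
      calc _ ≤ K₁ * (1 + u) * Real.exp (-(κ * u^2)) * Real.exp (-u^2 / (2 * S)) * (b - a) := by gcongr
        _ = _ := by rw [he0]; ring
  · have := h.count hF hρ3.le hb1 hab hMcl.isOpen_compl (u := u) (ε₁ := 1 / (2 * u)) (by positivity)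
      (C := K₁ * (1 + u) * Real.exp (-(c₂ * 0^2 * u^2)) * Real.exp (-u^2 / (2 * s₂))) (by positivity) MeasurableSet.univ
      (fun t ht htM ε hε hε1 => by
        refine hpoint t (hII ht) s₂ 0 u ε univ (hIv t ht) ?_ hs2S.le le_rfl hu hε ?_ ?_
        · by_contra hcon
          exact htM ⟨hII ht, (not_le.1 hcon).le⟩
        · calc ε * u ≤ 1 / (2 * u) * u := by gcongr
            _ = 1 / 2 := by field_simp
        · intro ω _ h0; exact absurd h0 (lt_irrefl _))
    simp only [indicator_univ] at this
    refine this.trans (ENNReal.ofReal_le_ofReal ?_)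
    refine le_trans ?_ (fin (K₁ * (b - a)) (by rw [hC]; linarith))
    calc _ = K₁ * (1 + u) * Real.exp (-u^2 / (2 * s₂)) * (b - a) := by simp
      _ ≤ K₁ * (1 + u) * (Real.exp (-(κ * u^2)) * Real.exp (-u^2 / (2 * S))) * (b - a) := by gcongr
      _ = _ := by rw [he0]; ring
  · refine (hout u hu0).trans (ENNReal.ofReal_le_ofReal ?_)
    refine le_trans ?_ (fin Co (by rw [hC]; linarith))
    gcongr
  · refine (h.both hF hρ3.le hb1 hρ (by linarith) hcF hM hS hρ4 hMF hu0).trans (ENNReal.ofReal_le_ofReal ?_)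
    refine le_trans ?_ (fin M (by rw [hC]; linarith))
    rw [he0, mul_assoc (1 + u)]
    refine mul_le_mul_of_nonneg_left ?_ hM.le
    calc _ ≤ Real.exp (-(κ * u^2)) * Real.exp (-u^2 / (2 * S)) :=
          mul_le_mul_of_nonneg_right hr3 (Real.exp_pos _).le
      _ ≤ _ := le_mul_of_one_le_left (by positivity) (by linarith)

end GX
end

section
open MeasureTheory ProbabilityTheory Set Filter Topology
open scoped NNReal ENNReal

namespace GX
set_option linter.unusedSectionVars false
set_option linter.unusedVariables false

theorem final
    {Ω : Type*} [MeasurableSpace Ω] (P : Measure Ω) [IsProbabilityMeasure P]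
    (A B : ℝ) (hAB : A < B)
    (X : ℝ → Ω → ℝ)
    (hjm : Measurable (Function.uncurry X))
    (hGauss : ∀ (n : ℕ) (c : Fin n → ℝ) (t : Fin n → ℝ),
      (∀ i, t i ∈ Set.Icc A B) →
      ∃ v : ℝ≥0, Measure.map (fun ω => ∑ i, c i * X (t i) ω) P = gaussianReal 0 v)
    (hpaths : ∀ᵐ ω ∂P, ContDiffOn ℝ 2 (fun t => X t ω) (Set.Icc A B))
    (r : ℝ → ℝ → ℝ)
    (hr : ∀ s t, r s t = ∫ ω, X s ω * X t ω ∂P)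
    (hrC2 : ContDiffOn ℝ 2 (fun q : ℝ × ℝ => r q.1 q.2) (Set.Icc A B ×ˢ Set.Icc A B))
    (t₀ : ℝ) (ht₀ : t₀ ∈ Set.Ioc A B)
    (hmax : ∀ t ∈ Set.Icc A B, r t t ≤ r t₀ t₀)
    (huniq : ∀ t ∈ Set.Icc A B, r t t = r t₀ t₀ → t = t₀)
    (hder0 : derivWithin (fun t => r t t) (Set.Icc A B) t₀ = 0)
    (hnondeg : P {ω | derivWithin (fun s => X s ω) (Set.Icc A B) t₀ = 0} < 1) :
    ∃ δ > (0:ℝ), ∃ χ > (0:ℝ), ∃ C > (0:ℝ), ∃ u₀ > (0:ℝ), ∀ u ≥ u₀,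
      |(P {ω | ∃ t ∈ Set.Icc A B, u ≤ |X t ω|}).toReal
          - 2 * ∫ ω, ((Set.ncard {t ∈ {t ∈ Set.Icc A B | r t₀ t₀ / (1 + δ) ≤ r t t} |
              X t ω = u ∧ 0 < derivWithin (fun s => X s ω) (Set.Icc A B) t} : ℕ) : ℝ) ∂P|
        ≤ C * Real.exp (-(u ^ 2) * (1 + χ) / (2 * r t₀ t₀)) := by
  classical
  obtain ⟨N, hsub, hNm, hN0⟩ := exists_measurable_superset_of_null (ae_iff.1 hpaths)
  have hae : ∀ᵐ ω ∂P, ω ∉ N := measure_eq_zero_iff_ae_notMem.1 hN0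
  set X' : ℝ → Ω → ℝ := fun t ω => Nᶜ.indicator (X t) ω with hX'
  have hon : ∀ ω, ω ∉ N → ∀ t, X' t ω = X t ω := fun ω hω t => indicator_of_mem (by exact hω) _
  have hoff : ∀ ω, ω ∈ N → ∀ t, X' t ω = 0 := fun ω hω t => indicator_of_notMem (by simpa using hω) _
  have hjm' : Measurable (Function.uncurry X') := by
    have : Function.uncurry X' = (Prod.snd ⁻¹' Nᶜ).indicator (Function.uncurry X) := by
      ext ⟨t, ω⟩
      by_cases hω : ω ∈ N <;> simp [hX', Function.uncurry, indicator, hω]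
    rw [this]
    exact hjm.indicator (measurable_snd hNm.compl)
  have hfun : ∀ ω, ω ∉ N → (fun t => X' t ω) = fun t => X t ω := fun ω hω => funext (hon ω hω)
  have hp' : ∀ ω, ContDiffOn ℝ 2 (fun t => X' t ω) (Icc A B) := by
    intro ω
    by_cases hω : ω ∈ N
    · have : (fun t => X' t ω) = fun _ => 0 := funext (hoff ω hω)
      rw [this]; exact contDiffOn_const
    · rw [hfun ω hω]
      by_contra hcon
      exact hω (hsub hcon)
  have hm' : ∀ t ∈ Icc A B, Measurable (X' t) := fun t _ => hjm'.comp measurable_prodMk_left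
  have hproc : Proc P A B X' (fun t ω => derivWithin (fun s => X' s ω) (Icc A B) t)
      (fun t ω => derivWithin (derivWithin (fun s => X' s ω) (Icc A B)) (Icc A B) t) := by
    refine ⟨hAB, hjm', fun ω => C2.of_contDiffOn hAB (hp' ω), GS_VX hm' ?_⟩
    intro n c t ht
    obtain ⟨v, hv⟩ := hGauss n c t ht
    refine ⟨v, ?_⟩
    rw [← hv]
    refine Measure.map_congr ?_
    filter_upwards [hae] with ω hω
    simp only [hon ω hω]
  have hcov : ∀ t, ∫ ω, X' t ω * X' t ω ∂P = r t t := by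
    intro t
    rw [hr]
    refine integral_congr_ae ?_
    filter_upwards [hae] with ω hω
    simp only [hon ω hω]
  have hrd : ContDiffOn ℝ 2 (fun t => r t t) (Icc A B) := by
    have := hrC2.comp (f := fun t : ℝ => (t, t)) (s := Icc A B)
      (contDiff_id.prodMk contDiff_id).contDiffOn (fun t ht => ⟨ht, ht⟩)
    exact this
  have ht0' : t₀ ∈ Icc A B := Ioc_subset_Icc_self ht₀
  have hd : HasDerivWithinAt (fun t => r t t) 0 (Icc A B) t₀ := by
    have := (hrd.differentiableOn (by norm_num) t₀ ht0').hasDerivWithinAt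
    rwa [hder0] at this
  have hnd : P {ω | derivWithin (fun s => X' s ω) (Icc A B) t₀ = 0} < 1 := by
    refine lt_of_eq_of_lt (measure_congr ?_) hnondeg
    filter_upwards [hae] with ω hω
    apply propext
    show (derivWithin (fun s => X' s ω) (Icc A B) t₀ = 0) ↔ (derivWithin (fun s => X s ω) (Icc A B) t₀ = 0)
    rw [hfun ω hω]
  have key := hproc.main ht₀ (by simpa only [hcov] using hrd.continuousOn)
    (by simpa only [hcov] using hmax) (by simpa only [hcov] using huniq)
    (by simpa only [hcov] using hd) hnd
  simp only [hcov] at key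
  obtain ⟨δ, hδ, χ, hχ, C, hC, u₀, hu₀, hk⟩ := key
  refine ⟨δ, hδ, χ, hχ, C, hC, u₀, hu₀, fun u hu => ?_⟩
  have e1 : P {ω | ∃ t ∈ Icc A B, u ≤ |X t ω|} = P {ω | ∃ t ∈ Icc A B, u ≤ |X' t ω|} := by
    refine measure_congr ?_
    filter_upwards [hae] with ω hω
    apply propext
    show (∃ t ∈ Icc A B, u ≤ |X t ω|) ↔ (∃ t ∈ Icc A B, u ≤ |X' t ω|)
    simp only [hon ω hω]
  rw [e1]
  refine le_of_eq_of_le ?_ (hk u hu)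
  congr 3
  refine integral_congr_ae ?_
  filter_upwards [hae] with ω hω
  simp only [ups, hon ω hω]
  rfl

end GX
end


open MeasureTheory ProbabilityTheory Set
open scoped NNReal

/-- Centered Gaussian process on `[A,B]`, a.s. `C²` paths, `C²` covariance,
variance maximal at the unique point `t₀ ∈ (A,B]` with `(σ²)′(t₀) = 0` and
`ℙ(∂ₜX(t₀) = 0) < 1`. Then there are `δ, χ, C, u₀ > 0` such that for `u ≥ u₀`,
`|ℙ(max_{[A,B]}|X| ≥ u) − 2E[N_u⁺(𝓜(δ))]| ≤ C e^{−u²(1+χ)/(2S)}`, where `N_u⁺(M)` is the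
number of up-crossings of the level `u` on `M` and `𝓜(δ) = {t ∈ [A,B] : σ²(t) ≥ S/(1+δ)}`. -/
theorem statement2
    {Ω : Type*} [MeasurableSpace Ω] (P : Measure Ω) [IsProbabilityMeasure P]
    (A B : ℝ) (hAB : A < B)
    (X : ℝ → Ω → ℝ)
    (hjm : Measurable (Function.uncurry X))
    (hGauss : ∀ (n : ℕ) (c : Fin n → ℝ) (t : Fin n → ℝ),
      (∀ i, t i ∈ Set.Icc A B) →
      ∃ v : ℝ≥0, Measure.map (fun ω => ∑ i, c i * X (t i) ω) P = gaussianReal 0 v)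
    (hpaths : ∀ᵐ ω ∂P, ContDiffOn ℝ 2 (fun t => X t ω) (Set.Icc A B))
    (r : ℝ → ℝ → ℝ)
    (hr : ∀ s t, r s t = ∫ ω, X s ω * X t ω ∂P)
    (hrC2 : ContDiffOn ℝ 2 (fun q : ℝ × ℝ => r q.1 q.2) (Set.Icc A B ×ˢ Set.Icc A B))
    (t₀ : ℝ) (ht₀ : t₀ ∈ Set.Ioc A B)
    (hmax : ∀ t ∈ Set.Icc A B, r t t ≤ r t₀ t₀)
    (huniq : ∀ t ∈ Set.Icc A B, r t t = r t₀ t₀ → t = t₀)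
    (hder0 : derivWithin (fun t => r t t) (Set.Icc A B) t₀ = 0)
    (hnondeg : P {ω | derivWithin (fun s => X s ω) (Set.Icc A B) t₀ = 0} < 1) :
    ∃ δ > (0:ℝ), ∃ χ > (0:ℝ), ∃ C > (0:ℝ), ∃ u₀ > (0:ℝ), ∀ u ≥ u₀,
      |(P {ω | ∃ t ∈ Set.Icc A B, u ≤ |X t ω|}).toReal
          - 2 * ∫ ω, ((Set.ncard {t ∈ {t ∈ Set.Icc A B | r t₀ t₀ / (1 + δ) ≤ r t t} |
              X t ω = u ∧ 0 < derivWithin (fun s => X s ω) (Set.Icc A B) t} : ℕ) : ℝ) ∂P|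
        ≤ C * Real.exp (-(u ^ 2) * (1 + χ) / (2 * r t₀ t₀)) := by
  exact GX.final P A B hAB X hjm hGauss hpaths r hr hrC2 t₀ ht₀ hmax huniq hder0 hnondeg
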